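/- arXiv:2309.15598 — 2 statements merged into one kernel-verified Lean document; each statement's English description precedes it below -/
import Mathlib

section
/- Let K ⊂ ℝ^{n+1} be a smooth, strictly convex body with the origin in its interior, with support function h, radial function r = |X| where X = Dh, Gauss curvature 𝒦, and measure dV = h σ_n dμ. Let φ: (0,∞) → (0,∞) be C¹-smooth and set f = φ(r). Then ∫ f² ⟨ ∇̄ log(h^{n+2}/𝒦) − (r (log φ)'(r))² ∇̄ log r , h X ⟩ dV ≤ n |∫ f X dV|² / ∫ dV, where |∫ f X dV| is the Euclidean norm of the vector ∫ f X dV ∈ ℝ^{n+1}. -/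
open MeasureTheory Matrix Metric
open scoped RealInnerProductSpace

noncomputable section

/-- Euclidean space `ℝ^{n+1}`. -/
abbrev Euc (n : ℕ) : Type := EuclideanSpace ℝ (Fin (n + 1))

/-- The Euclidean Hessian matrix of `H : ℝ^{n+1} → ℝ` at `x`. -/
def ehess (n : ℕ) (H : Euc n → ℝ) (x : Euc n) : Matrix (Fin (n + 1)) (Fin (n + 1)) ℝ :=
  Matrix.of fun i j =>
    fderiv ℝ (fun y => fderiv ℝ H y (EuclideanSpace.single j 1)) x (EuclideanSpace.single i 1)

/-- For the 1-homogeneous extension `H` of the support function `h` and `x ∈ S^n`, the matrix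
`D²H(x) + h(x)·x xᵀ`.  Its restriction to the tangent space `x^⊥ = T_x S^n` is
`A[h] = ∇̄²h + h ḡ`, and `x` is an eigenvector with eigenvalue `h(x)`. -/
def bmat (n : ℕ) (H : Euc n → ℝ) (x : Euc n) : Matrix (Fin (n + 1)) (Fin (n + 1)) ℝ :=
  ehess n H x + Matrix.of fun i j => H x * (x i * x j)

/-- `σ_n = det A[h] = det(∇̄²h + h ḡ)/det ḡ`, computed as `det(bmat)/h`. -/
def sigman (n : ℕ) (H : Euc n → ℝ) (x : Euc n) : ℝ :=
  Matrix.det (bmat n H x) / H x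

/-- The Gauss curvature `𝒦 = 1/σ_n`. -/
def gaussCurv (n : ℕ) (H : Euc n → ℝ) (x : Euc n) : ℝ := (sigman n H x)⁻¹

/-- The round (spherical) gradient `∇̄f` at `x ∈ S^n`: the Euclidean gradient of the
0-homogeneous extension `y ↦ f(y/‖y‖)`.  It depends only on `f|_{S^n}` and lies in `T_x S^n`. -/
def sphGrad (n : ℕ) (f : Euc n → ℝ) (x : Euc n) : Euc n :=
  gradient (fun y => f (‖y‖⁻¹ • y)) x

/-- The function `log (h^{n+2}/𝒦)` (as a function of `y`; on the sphere it agrees with the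
centro-affine expression appearing in the paper). -/
def logQ (n : ℕ) (H : Euc n → ℝ) (y : Euc n) : ℝ :=
  Real.log ((H y) ^ (n + 2) / gaussCurv n H y)

/-- The centro-affine inner product `g(∇f, ∇u) = h ⟨A[h]⁻¹ ∇̄f, ∇̄u⟩` of the `g`-gradients of
`f` and `u`, where `g = A[h]/h` is the centro-affine metric. -/
def gInner (n : ℕ) (H f u : Euc n → ℝ) (x : Euc n) : ℝ :=
  H x * ∑ i, (bmat n H x)⁻¹.mulVec (fun j => sphGrad n f x j) i * sphGrad n u x i

/-- The squared centro-affine norm `|∇f|_g²` of the `g`-gradient of `f`. -/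
def gNormSq (n : ℕ) (H f : Euc n → ℝ) (x : Euc n) : ℝ := gInner n H f f x

/-- The centro-affine Laplacian `Δf = div_g(∇ f)` (with respect to the centro-affine connection
`∇` induced by the centro-affine normal `ξ = X`, and the centro-affine metric `g = A[h]/h`),
computed via the identity `Δf = tr_g(A[hf]/h) - n f`, i.e.
`Δf = tr(B[h]⁻¹ B[hf]) - (n+1) f` where `B[u] = D²ũ + u·x xᵀ` for the 1-homogeneous
extension `ũ` of `u`. -/
def caLap (n : ℕ) (H f : Euc n → ℝ) (x : Euc n) : ℝ :=
  Matrix.trace ((bmat n H x)⁻¹ * bmat n (fun y => H y * f (‖y‖⁻¹ • y)) x) - (n + 1) * f x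

/-- The spherical Lebesgue measure on `S^n ⊂ ℝ^{n+1}` (up to a positive constant). -/
def sphMeasure (n : ℕ) : Measure (sphere (0 : Euc n) 1) :=
  (volume : Measure (Euc n)).toSphere

/-- The density of the cone-volume-type measure `dV = h σ_n dμ` with respect to the spherical
Lebesgue measure. -/
def volDens (n : ℕ) (H : Euc n → ℝ) (x : Euc n) : ℝ := H x * sigman n H x

section PL
open scoped ENNReal Pointwise

lemma bm_one_compact (K L S : Set ℝ) (hK : IsCompact K) (hL : IsCompact L) (hKn : K.Nonempty)
    (hLn : L.Nonempty) (h : ∀ a ∈ K, ∀ b ∈ L, (a + b) / 2 ∈ S) :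
    volume K + volume L ≤ 2 * volume S := by
  have hm := hK.sSup_mem hKn
  have hl := hL.sInf_mem hLn
  set m := sSup K
  set l := sInf L
  have h1 : volume ((fun x => l + x) '' K ∪ (fun x => m + x) '' L) = volume K + volume L := by
    rw [measure_union₀]
    · simp
    · exact (((Homeomorph.addLeft m).isCompact_image).2 hL).measurableSet.nullMeasurableSet
    · refine measure_mono_null (t := {m + l}) ?_ (by simp)
      rintro z ⟨⟨x, hx, rfl⟩, ⟨y, hy, hxy⟩⟩
      have h1 : x ≤ m := le_csSup hK.bddAbove hx
      have h2 : l ≤ y := csInf_le hL.bddBelow hy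
      simp only [Set.mem_singleton_iff] at *
      linarith
  rw [← h1]
  have h2 : (fun x => l + x) '' K ∪ (fun x => m + x) '' L ⊆ (2:ℝ) • S := by
    rintro z (⟨x, hx, rfl⟩ | ⟨x, hx, rfl⟩)
    · exact ⟨_, h x hx l hl, by simp; ring⟩
    · exact ⟨_, h m hm x hx, by simp; ring⟩
  refine (measure_mono h2).trans ?_
  rw [Measure.addHaar_smul]
  simp

lemma bm_one (A B S : Set ℝ) (hA : MeasurableSet A) (hB : MeasurableSet B) (hAn : A.Nonempty)
    (hBn : B.Nonempty) (h : ∀ a ∈ A, ∀ b ∈ B, (a + b) / 2 ∈ S) :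
    volume A + volume B ≤ 2 * volume S := by
  obtain ⟨a, ha⟩ := hAn
  obtain ⟨b, hb⟩ := hBn
  have key : ∀ K ⊆ A, IsCompact K → ∀ L ⊆ B, IsCompact L →
      volume K + volume L ≤ 2 * volume S := by
    intro K hKA hK L hLB hL
    have := bm_one_compact (insert a K) (insert b L) S (hK.insert a) (hL.insert b)
      (Set.insert_nonempty _ _) (Set.insert_nonempty _ _)
      (fun x hx y hy => h x (Set.insert_subset ha hKA hx) y (Set.insert_subset hb hLB hy))
    exact (add_le_add (measure_mono (Set.subset_insert _ _))
      (measure_mono (Set.subset_insert _ _))).trans this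
  have h1 : ∀ K ⊆ A, IsCompact K → volume K + volume B ≤ 2 * volume S := by
    intro K hKA hK
    refine le_of_forall_lt fun c hc => ?_
    rcases lt_or_ge c (volume K) with h2 | h2
    · exact (h2.trans_le le_self_add).trans_le (key K hKA hK ∅ (by simp) isCompact_empty)
    · obtain ⟨e, he⟩ := exists_add_of_le h2
      have hK' : volume K ≠ ∞ := hK.measure_lt_top.ne
      rw [he, ENNReal.add_lt_add_iff_left hK'] at hc
      obtain ⟨L, hLB, hL, hL2⟩ := hB.exists_lt_isCompact hc
      rw [he]
      exact lt_of_lt_of_le ((ENNReal.add_lt_add_iff_left hK').2 hL2) (key K hKA hK L hLB hL)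
  refine le_of_forall_lt fun c hc => ?_
  rcases lt_or_ge c (volume B) with h2 | h2
  · exact lt_of_lt_of_le (h2.trans_le le_add_self) (h1 ∅ (by simp) isCompact_empty)
  · obtain ⟨e, he⟩ := exists_add_of_le h2
    rcases eq_or_ne (volume B) ∞ with h3 | h3
    · rw [h3] at h2
      exact absurd (lt_of_lt_of_le hc le_top) (by simpa using h2)
    rw [he, add_comm (volume A), ENNReal.add_lt_add_iff_left h3] at hc
    obtain ⟨K, hKA, hK, hK2⟩ := hA.exists_lt_isCompact hc
    rw [he]
    refine lt_of_lt_of_le ((ENNReal.add_lt_add_iff_left h3).2 hK2) ?_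
    rw [add_comm]
    exact h1 K hKA hK

lemma pl_norm (f g h : ℝ → ℝ) (hf : Measurable f) (hg : Measurable g) (hh : Measurable h)
    (f0 : ∀ x, 0 ≤ f x) (g0 : ∀ x, 0 ≤ g x) (h0 : ∀ x, 0 ≤ h x) (f1 : ∀ x, f x ≤ 1)
    (g1 : ∀ x, g x ≤ 1)
    (hfs : ∀ l < 1, ∃ x, l < f x) (hgs : ∀ l < 1, ∃ x, l < g x)
    (H : ∀ l, 0 < l → l < 1 → ∀ x y, l < f x → l < g y → l < h ((x + y) / 2)) :
    (∫⁻ x, ENNReal.ofReal (f x)) + (∫⁻ x, ENNReal.ofReal (g x))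
      ≤ 2 * ∫⁻ x, ENNReal.ofReal (h x) := by
  rw [lintegral_eq_lintegral_meas_lt volume (.of_forall f0) hf.aemeasurable,
    lintegral_eq_lintegral_meas_lt volume (.of_forall g0) hg.aemeasurable,
    lintegral_eq_lintegral_meas_lt volume (.of_forall h0) hh.aemeasurable,
    ← lintegral_const_mul' _ _ (by simp), ← lintegral_add_left']
  · refine setLIntegral_mono' measurableSet_Ioi fun t ht => ?_
    rcases lt_or_ge t 1 with h1 | h1
    · exact bm_one _ _ _ (hf measurableSet_Ioi) (hg measurableSet_Ioi) (hfs t h1) (hgs t h1)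
        (fun x hx y hy => H t ht h1 x y hx hy)
    · have e1 : {a | t < f a} = ∅ := by
        ext a; simp; exact (f1 a).trans h1
      have e2 : {a | t < g a} = ∅ := by
        ext a; simp; exact (g1 a).trans h1
      simp [e1, e2]
  · refine Antitone.measurable (fun s t hst => measure_mono fun x hx => ?_) |>.aemeasurable
    exact lt_of_le_of_lt hst hx

lemma ennreal_amgm (P Q R : ℝ≥0∞) (h : P + Q ≤ 2 * R) : P * Q ≤ R ^ 2 := by
  rcases eq_or_ne R ∞ with rfl | hR
  · simp
  have hP : P ≠ ∞ := by
    rintro rfl; simp at h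
    exact absurd h (ENNReal.mul_ne_top (by simp) hR)
  have hQ : Q ≠ ∞ := by
    rintro rfl; simp at h
    exact absurd h (ENNReal.mul_ne_top (by simp) hR)
  lift P to NNReal using hP
  lift Q to NNReal using hQ
  lift R to NNReal using hR
  norm_cast at *
  have h' : (P:ℝ) + Q ≤ 2 * R := by exact_mod_cast h
  have : (P:ℝ) * Q ≤ R ^ 2 := by
    nlinarith [sq_nonneg ((P:ℝ) - Q), P.2, Q.2, R.2]
  exact_mod_cast this

lemma pl_bdd (f g h : ℝ → ℝ≥0∞) (hf : Measurable f) (hg : Measurable g) (hh : Measurable h)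
    (M : ℝ≥0∞) (hM : M ≠ ∞) (fM : ∀ x, f x ≤ M) (gM : ∀ x, g x ≤ M)
    (H : ∀ x y, f x * g y ≤ h ((x + y) / 2) ^ 2) :
    (∫⁻ x, f x) * (∫⁻ x, g x) ≤ (∫⁻ x, h x) ^ 2 := by
  set a := ⨆ x, f x with ha
  set b := ⨆ x, g x with hb
  have haM : a ≠ ∞ := ((iSup_le fM).trans_lt hM.lt_top).ne
  have hbM : b ≠ ∞ := ((iSup_le gM).trans_lt hM.lt_top).ne
  have fa : ∀ x, f x ≤ a := le_iSup f
  have gb : ∀ x, g x ≤ b := le_iSup g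
  rcases eq_or_ne a 0 with h0 | ha0
  · have : f = fun _ => 0 := by ext x; simpa [h0] using fa x
    simp [this]
  rcases eq_or_ne b 0 with h0 | hb0
  · have : g = fun _ => 0 := by ext x; simpa [h0] using gb x
    simp [this]
  obtain ⟨c, hc⟩ : ∃ c : ℝ≥0∞, c ^ 2 = a * b :=
    ⟨(a * b) ^ (1/2 : ℝ), by rw [← ENNReal.rpow_natCast, ← ENNReal.rpow_mul]; norm_num⟩
  have hab0 : a * b ≠ 0 := mul_ne_zero ha0 hb0
  have habM : a * b ≠ ∞ := ENNReal.mul_ne_top haM hbM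
  have hc0 : c ≠ 0 := by rintro rfl; simp at hc; tauto
  have hcM : c ≠ ∞ := by rintro rfl; simp at hc; exact habM hc.symm
  have f1 : ∀ x, f x / a ≤ 1 := fun x => ENNReal.div_le_of_le_mul (by simpa using fa x)
  have g1 : ∀ x, g x / b ≤ 1 := fun x => ENNReal.div_le_of_le_mul (by simpa using gb x)
  have e1 : ∀ x, ENNReal.ofReal ((f x / a).toReal) = f x / a := fun x =>
    ENNReal.ofReal_toReal ((f1 x).trans_lt (by simp)).ne
  have e2 : ∀ x, ENNReal.ofReal ((g x / b).toReal) = g x / b := fun x =>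
    ENNReal.ofReal_toReal ((g1 x).trans_lt (by simp)).ne
  have e3 : ∀ x, ENNReal.ofReal ((min (h x / c) 1).toReal) = min (h x / c) 1 := fun x =>
    ENNReal.ofReal_toReal ((min_le_right _ _).trans_lt (by simp)).ne
  have key := pl_norm (fun x => (f x / a).toReal) (fun x => (g x / b).toReal)
    (fun x => (min (h x / c) 1).toReal) (by fun_prop) (by fun_prop) (by fun_prop)
    (fun x => ENNReal.toReal_nonneg) (fun x => ENNReal.toReal_nonneg)
    (fun x => ENNReal.toReal_nonneg)
    (fun x => ENNReal.toReal_le_of_le_ofReal (by simp) (by simpa using f1 x))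
    (fun x => ENNReal.toReal_le_of_le_ofReal (by simp) (by simpa using g1 x)) ?_ ?_ ?_
  · simp only [e1, e2, e3] at key
    have key2 : (∫⁻ x, f x / a) + (∫⁻ x, g x / b) ≤ 2 * ∫⁻ x, h x / c :=
      key.trans (mul_le_mul_right (lintegral_mono fun x => min_le_left _ _) _)
    simp only [div_eq_mul_inv] at key2
    rw [lintegral_mul_const _ hf, lintegral_mul_const _ hg, lintegral_mul_const _ hh] at key2
    have := ennreal_amgm _ _ _ key2
    rw [mul_pow, ← ENNReal.inv_pow, hc] at this
    calc (∫⁻ x, f x) * (∫⁻ x, g x)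
        = ((∫⁻ x, f x) * a⁻¹ * ((∫⁻ x, g x) * b⁻¹)) * (a * b) := by
          rw [show (∫⁻ x, f x) * a⁻¹ * ((∫⁻ x, g x) * b⁻¹) * (a * b)
            = (∫⁻ x, f x) * (∫⁻ x, g x) * (a⁻¹ * a) * (b⁻¹ * b) by ring,
            ENNReal.inv_mul_cancel ha0 haM, ENNReal.inv_mul_cancel hb0 hbM]; simp
      _ ≤ ((∫⁻ x, h x) ^ 2 * (a * b)⁻¹) * (a * b) := mul_le_mul_left this _
      _ = _ := by rw [mul_assoc, ENNReal.inv_mul_cancel hab0 habM, mul_one]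
  · intro l hl
    rcases lt_or_ge l 0 with h0 | h0
    · exact ⟨0, h0.trans_le ENNReal.toReal_nonneg⟩
    have : ENNReal.ofReal l * a < a := by
      conv_rhs => rw [← one_mul a]
      exact ENNReal.mul_lt_mul_left ha0 haM (by simpa using hl)
    obtain ⟨x, hx⟩ := lt_iSup_iff.1 (this.trans_eq ha)
    refine ⟨x, ?_⟩
    rw [← ENNReal.ofReal_lt_iff_lt_toReal h0 ((f1 x).trans_lt (by simp)).ne]
    rwa [ENNReal.lt_div_iff_mul_lt (.inl ha0) (.inl haM)]
  · intro l hl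
    rcases lt_or_ge l 0 with h0 | h0
    · exact ⟨0, h0.trans_le ENNReal.toReal_nonneg⟩
    have : ENNReal.ofReal l * b < b := by
      conv_rhs => rw [← one_mul b]
      exact ENNReal.mul_lt_mul_left hb0 hbM (by simpa using hl)
    obtain ⟨x, hx⟩ := lt_iSup_iff.1 (this.trans_eq hb)
    refine ⟨x, ?_⟩
    rw [← ENNReal.ofReal_lt_iff_lt_toReal h0 ((g1 x).trans_lt (by simp)).ne]
    rwa [ENNReal.lt_div_iff_mul_lt (.inl hb0) (.inl hbM)]
  · intro l l0 l1 x y hx hy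
    rw [← ENNReal.ofReal_lt_iff_lt_toReal l0.le ((f1 x).trans_lt (by simp)).ne] at hx
    rw [← ENNReal.ofReal_lt_iff_lt_toReal l0.le ((g1 y).trans_lt (by simp)).ne] at hy
    rw [← ENNReal.ofReal_lt_iff_lt_toReal l0.le ((min_le_right _ _).trans_lt (by simp)).ne]
    refine lt_min ?_ (by simpa using l1)
    have h1 : ENNReal.ofReal l ^ 2 < (f x / a) * (g y / b) := by
      rw [sq]; exact ENNReal.mul_lt_mul hx hy
    have h2 : (f x / a) * (g y / b) ≤ (h ((x + y) / 2) / c) ^ 2 := by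
      have : (f x / a) * (g y / b) = f x * g y / (a * b) := by
        simp only [div_eq_mul_inv]
        rw [ENNReal.mul_inv (.inl ha0) (.inl haM)]; ring
      rw [this, div_eq_mul_inv (h _), mul_pow, ← ENNReal.inv_pow, hc, ← div_eq_mul_inv]
      exact ENNReal.div_le_div_right (H x y) _
    by_contra hcon
    exact absurd (h1.trans_le h2) (not_lt.2 (pow_le_pow_left' (not_lt.1 hcon) 2))

lemma pl_one (f g h : ℝ → ℝ≥0∞) (hf : Measurable f) (hg : Measurable g) (hh : Measurable h)
    (H : ∀ x y, f x * g y ≤ h ((x + y) / 2) ^ 2) :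
    (∫⁻ x, f x) * (∫⁻ x, g x) ≤ (∫⁻ x, h x) ^ 2 := by
  have trunc : ∀ u : ℝ → ℝ≥0∞, Measurable u → (∫⁻ x, u x) = ⨆ k : ℕ, ∫⁻ x, min (u x) k := by
    intro u hu
    rw [← lintegral_iSup (fun k => by fun_prop)]
    · congr 1; ext x
      refine le_antisymm ?_ (iSup_le fun k => min_le_left _ _)
      rcases eq_or_ne (u x) ∞ with h | h
      · simp [h, ENNReal.iSup_natCast]
      · obtain ⟨k, hk⟩ := ENNReal.exists_nat_gt h
        exact le_iSup_of_le k (by simp [hk.le])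
    · intro i j hij x
      exact min_le_min le_rfl (by exact_mod_cast hij)
  rw [trunc f hf, trunc g hg]
  refine ENNReal.mul_le_of_forall_lt fun a' ha b' hb => ?_
  obtain ⟨i, hi⟩ := lt_iSup_iff.1 ha
  obtain ⟨j, hj⟩ := lt_iSup_iff.1 hb
  refine (mul_le_mul' hi.le hj.le).trans ?_
  refine pl_bdd (fun x => min (f x) i) (fun x => min (g x) j) h (by fun_prop) (by fun_prop) hh
    (max i j) (by simp) (fun x => (min_le_right _ _).trans (le_max_left _ _))
    (fun x => (min_le_right _ _).trans (le_max_right _ _)) (fun x y => ?_)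
  exact (mul_le_mul' (min_le_left _ _) (min_le_left _ _)).trans (H x y)

lemma pl_pi (n : ℕ) : ∀ (f g h : (Fin n → ℝ) → ℝ≥0∞), Measurable f → Measurable g → Measurable h →
    (∀ x y, f x * g y ≤ h ((2:ℝ)⁻¹ • (x + y)) ^ 2) →
    (∫⁻ x, f x) * (∫⁻ x, g x) ≤ (∫⁻ x, h x) ^ 2 := by
  induction n with
  | zero =>
    intro f g h hf hg hh H
    have hv : (volume : Measure (Fin 0 → ℝ)) Set.univ = 1 := by simp [volume_pi]
    simp only [lintegral_unique, hv, mul_one]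
    have := H default default
    rw [Subsingleton.elim ((2:ℝ)⁻¹ • (default + default : Fin 0 → ℝ)) default] at this
    convert this
  | succ n ih =>
    intro f g h hf hg hh H
    have e : ∀ u : (Fin (n+1) → ℝ) → ℝ≥0∞, Measurable u →
        ∫⁻ x, u x = ∫⁻ s : ℝ, ∫⁻ y : Fin n → ℝ, u (Fin.cons s y) := by
      intro u hu
      have hp := (volume_preserving_piFinSuccAbove (fun _ : Fin (n+1) => ℝ) 0).symm
      rw [← hp.lintegral_comp hu]
      rw [Measure.volume_eq_prod, lintegral_prod _ (by fun_prop)]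
      simp [MeasurableEquiv.piFinSuccAbove]
      rfl
    have hcons : Measurable (fun p : ℝ × (Fin n → ℝ) => (Fin.cons p.1 p.2 : Fin (n+1) → ℝ)) := by
      refine measurable_pi_iff.2 fun i => ?_
      refine Fin.cases ?_ (fun j => ?_) i
      · simpa using measurable_fst
      · simp; fun_prop
    rw [e f hf, e g hg, e h hh]
    refine pl_one _ _ _ ?_ ?_ ?_ ?_
    · exact (hf.comp hcons).lintegral_prod_right'
    · exact (hg.comp hcons).lintegral_prod_right'
    · exact (hh.comp hcons).lintegral_prod_right'
    · intro s t
      refine ih _ _ _ (hf.comp (hcons.comp measurable_prodMk_left))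
        (hg.comp (hcons.comp measurable_prodMk_left))
        (hh.comp (hcons.comp measurable_prodMk_left)) fun x y => ?_
      refine (H _ _).trans (le_of_eq ?_)
      congr 2
      ext i
      refine Fin.cases ?_ (fun j => ?_) i
      · simp; ring
      · simp; ring

/-- Multiplicative midpoint Brunn–Minkowski. -/
lemma bm_euc (n : ℕ) (A B S : Set (EuclideanSpace ℝ (Fin n))) (hA : MeasurableSet A)
    (hB : MeasurableSet B) (hS : MeasurableSet S)
    (h : ∀ a ∈ A, ∀ b ∈ B, (2:ℝ)⁻¹ • (a + b) ∈ S) :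
    volume A * volume B ≤ volume S ^ 2 := by
  have hp := (EuclideanSpace.volume_preserving_symm_measurableEquiv_toLp (Fin n)).symm
  have e : ∀ U : Set (EuclideanSpace ℝ (Fin n)), MeasurableSet U →
      volume U = ∫⁻ x : Fin n → ℝ, U.indicator 1 (WithLp.toLp 2 x) := by
    intro U hU
    rw [← lintegral_indicator_one hU, ← hp.lintegral_comp (by fun_prop)]
    rfl
  rw [e A hA, e B hB, e S hS]
  have hm : ∀ U : Set (EuclideanSpace ℝ (Fin n)), MeasurableSet U →
      Measurable fun x : Fin n → ℝ => U.indicator (1 : EuclideanSpace ℝ (Fin n) → ℝ≥0∞) (WithLp.toLp 2 x) := by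
    intro U hU
    exact (measurable_one.indicator hU).comp (by fun_prop)
  refine pl_pi n _ _ _ (hm A hA) (hm B hB) (hm S hS) fun x y => ?_
  by_cases hx : WithLp.toLp 2 x ∈ A
  · by_cases hy : WithLp.toLp 2 y ∈ B
    · have := h _ hx _ hy
      have h2 : WithLp.toLp 2 ((2:ℝ)⁻¹ • (x + y)) ∈ S := this
      rw [Set.indicator_of_mem hx, Set.indicator_of_mem hy, Set.indicator_of_mem h2]; simp
    · simp [hy]
  · simp [hx]
end PL

section Polar
open scoped ENNReal

lemma polar_mp (n : ℕ) : MeasurePreserving (homeomorphUnitSphereProd (Euc n))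
    ((volume : Measure (Euc n)).comap (↑)) ((sphMeasure n).prod (Measure.volumeIoiPow n)) := by
  have := (volume : Measure (Euc n)).measurePreserving_homeomorphUnitSphereProd
  simpa [sphMeasure] using this

lemma polar_real (n : ℕ) (a : ℝ → ℝ) (k : Euc n → ℝ) :
    ∫ y : Euc n, a ‖y‖ * k (‖y‖⁻¹ • y)
      = (∫ x : sphere (0 : Euc n) 1, k x ∂(sphMeasure n)) * ∫ r in Set.Ioi (0:ℝ), r ^ n * a r :=
  calc
    ∫ y : Euc n, a ‖y‖ * k (‖y‖⁻¹ • y)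
      = ∫ y : ({(0)}ᶜ : Set (Euc n)), a ‖y.1‖ * k (‖y.1‖⁻¹ • y.1)
          ∂((volume : Measure (Euc n)).comap (↑)) := by
      rw [integral_subtype_comap (measurableSet_singleton _).compl
        fun y => a ‖y‖ * k (‖y‖⁻¹ • y), restrict_compl_singleton]
    _ = ∫ p : sphere (0 : Euc n) 1 × Set.Ioi (0:ℝ), k p.1 * a p.2
          ∂((sphMeasure n).prod (Measure.volumeIoiPow n)) := by
      rw [← (polar_mp n).integral_comp (Homeomorph.measurableEmbedding _)]
      simp [mul_comm]
    _ = (∫ x : sphere (0 : Euc n) 1, k x ∂(sphMeasure n)) *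
          ∫ r : Set.Ioi (0:ℝ), a r ∂(Measure.volumeIoiPow n) := by
      haveI : SFinite (sphMeasure n) := by unfold sphMeasure; infer_instance
      exact integral_prod_mul (fun x : sphere (0 : Euc n) 1 => k x)
        (fun r : Set.Ioi (0:ℝ) => a r)
    _ = _ := by
      congr 1
      simp only [Measure.volumeIoiPow, ENNReal.ofReal]
      rw [integral_withDensity_eq_integral_smul,
        integral_subtype_comap measurableSet_Ioi fun r ↦ Real.toNNReal (r ^ n) • a r,
        setIntegral_congr_fun measurableSet_Ioi fun x hx ↦ ?_]
      · rw [NNReal.smul_def, Real.coe_toNNReal _ (pow_nonneg hx.out.le _), smul_eq_mul]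
      · exact (measurable_subtype_coe.pow_const _).real_toNNReal

lemma polar_star (n : ℕ) (c : Euc n → ℝ≥0∞) (ρ : Euc n → ℝ)
    (hc : Measurable fun x : sphere (0 : Euc n) 1 => c x)
    (hρ : Measurable fun x : sphere (0 : Euc n) 1 => ρ x)
    (hpos : ∀ x ∈ sphere (0 : Euc n) 1, 0 < ρ x)
    (hm : MeasurableSet {y : Euc n | y ≠ 0 ∧ ‖y‖ < ρ (‖y‖⁻¹ • y)}) :
    ∫⁻ y in {y : Euc n | y ≠ 0 ∧ ‖y‖ < ρ (‖y‖⁻¹ • y)}, c (‖y‖⁻¹ • y)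
      = ∫⁻ x : sphere (0 : Euc n) 1, c x * ENNReal.ofReal (ρ x ^ (n + 1) / (n + 1))
          ∂(sphMeasure n) := by
  set U := {y : Euc n | y ≠ 0 ∧ ‖y‖ < ρ (‖y‖⁻¹ • y)} with hU
  have hS : SFinite (sphMeasure n) := by unfold sphMeasure; infer_instance
  have hW : MeasurableSet {p : sphere (0 : Euc n) 1 × Set.Ioi (0:ℝ) | (p.2:ℝ) < ρ p.1} :=
    measurableSet_lt (by fun_prop) (hρ.comp measurable_fst)
  calc ∫⁻ y in U, c (‖y‖⁻¹ • y)
      = ∫⁻ y, U.indicator (fun y => c (‖y‖⁻¹ • y)) y := (lintegral_indicator hm _).symm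
    _ = ∫⁻ y : ({(0)}ᶜ : Set (Euc n)), U.indicator (fun y => c (‖y‖⁻¹ • y)) y
          ∂((volume : Measure (Euc n)).comap (↑)) := by
        rw [lintegral_subtype_comap (measurableSet_singleton _).compl, restrict_compl_singleton]
    _ = ∫⁻ p : sphere (0 : Euc n) 1 × Set.Ioi (0:ℝ),
          {p : sphere (0 : Euc n) 1 × Set.Ioi (0:ℝ) | (p.2:ℝ) < ρ p.1}.indicator
            (fun p => c p.1) p ∂((sphMeasure n).prod (Measure.volumeIoiPow n)) := by
        rw [← (polar_mp n).lintegral_comp_emb (Homeomorph.measurableEmbedding _)]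
        refine lintegral_congr fun y => ?_
        have hy : (y : Euc n) ≠ 0 := y.2
        simp [Set.indicator, hU, hy]
    _ = ∫⁻ x : sphere (0 : Euc n) 1, ∫⁻ r : Set.Ioi (0:ℝ),
          {p : sphere (0 : Euc n) 1 × Set.Ioi (0:ℝ) | (p.2:ℝ) < ρ p.1}.indicator
            (fun p => c p.1) (x, r) ∂(Measure.volumeIoiPow n) ∂(sphMeasure n) := by
        rw [lintegral_prod]
        exact ((hc.comp measurable_fst).indicator hW).aemeasurable
    _ = _ := by
        refine lintegral_congr fun x => ?_
        have hx := hpos x x.2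
        have := Measure.volumeIoiPow_apply_Iio n ⟨ρ x, hx⟩
        simp only at this
        rw [← this, ← lintegral_indicator_const measurableSet_Iio]
        refine lintegral_congr fun r => ?_
        simp [Set.indicator, ← Subtype.coe_lt_coe]
end Polar

section Calc
open scoped ENNReal Topology ContDiff

/-- The standing assumptions on the support function. -/
structure CBody (n : ℕ) (H : Euc n → ℝ) : Prop where
  homog : ∀ c : ℝ, 0 < c → ∀ x : Euc n, H (c • x) = c * H x
  conv : ConvexOn ℝ Set.univ H
  smooth : ContDiffOn ℝ (⊤ : ℕ∞) H {(0 : Euc n)}ᶜ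
  pos : ∀ x ∈ sphere (0 : Euc n) 1, 0 < H x
  posdef : ∀ x ∈ sphere (0 : Euc n) 1, (bmat n H x).PosDef

/-- The Hessian as a continuous linear map. -/
def hA (n : ℕ) (H : Euc n → ℝ) (y : Euc n) : Euc n →L[ℝ] Euc n := fderiv ℝ (gradient H) y

variable {n : ℕ} {H : Euc n → ℝ}

lemma unit_ne {x : Euc n} (hx : x ∈ sphere (0 : Euc n) 1) : x ≠ 0 := by
  rintro rfl; simp at hx

lemma unit_pi {y : Euc n} (hy : y ≠ 0) : ‖y‖⁻¹ • y ∈ sphere (0 : Euc n) 1 := by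
  simp [norm_smul, hy]

lemma CBody.H_cd (h : CBody n H) {y : Euc n} (hy : y ≠ 0) : ContDiffAt ℝ ∞ H y :=
  h.smooth.contDiffAt (isOpen_compl_singleton.mem_nhds hy)

lemma CBody.H_diff (h : CBody n H) {y : Euc n} (hy : y ≠ 0) : DifferentiableAt ℝ H y :=
  (h.H_cd hy).differentiableAt (by simp)

lemma CBody.H_grad (h : CBody n H) {y : Euc n} (hy : y ≠ 0) :
    HasFDerivAt H (innerSL ℝ (gradient H y)) y := by
  have := (h.H_diff hy).hasGradientAt.hasFDerivAt
  exact this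

lemma CBody.G_cd (h : CBody n H) {y : Euc n} (hy : y ≠ 0) : ContDiffAt ℝ ∞ (gradient H) y := by
  have h1 : ContDiffAt ℝ ∞ (fderiv ℝ H) y := (h.H_cd hy).fderiv_right (by simp)
  exact ((InnerProductSpace.toDual ℝ (Euc n)).symm.toContinuousLinearEquiv.contDiff.contDiffAt).comp
    y h1

lemma CBody.G_fd (h : CBody n H) {y : Euc n} (hy : y ≠ 0) :
    HasFDerivAt (gradient H) (hA n H y) y :=
  ((h.G_cd hy).differentiableAt (by simp)).hasFDerivAt

lemma CBody.A_cd (h : CBody n H) {y : Euc n} (hy : y ≠ 0) : ContDiffAt ℝ ∞ (hA n H) y :=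
  (h.G_cd hy).fderiv_right (by simp)

lemma CBody.G_homog (h : CBody n H) {y : Euc n} (hy : y ≠ 0) {c : ℝ} (hc : 0 < c) :
    gradient H (c • y) = gradient H y := by
  have hcy : c • y ≠ 0 := smul_ne_zero hc.ne' hy
  have h1 : HasFDerivAt (fun z => H (c • z)) ((innerSL ℝ (gradient H (c • y))).comp
      (c • ContinuousLinearMap.id ℝ (Euc n))) y :=
    (h.H_grad hcy).comp y ((hasFDerivAt_id y).const_smul c)
  have h2 : HasFDerivAt (fun z => H (c • z)) (c • innerSL ℝ (gradient H y)) y := by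
    have : (fun z => H (c • z)) = fun z => c * H z := by ext z; exact h.homog c hc z
    rw [this]
    exact (h.H_grad hy).const_mul c
  have h3 := h1.unique h2
  refine ext_inner_right ℝ fun v => ?_
  have := congrArg (fun L => L v) h3
  simpa [inner_smul_right, hc.ne'] using this

lemma CBody.A_homog (h : CBody n H) {y : Euc n} (hy : y ≠ 0) {c : ℝ} (hc : 0 < c) :
    hA n H (c • y) = c⁻¹ • hA n H y := by
  have hcy : c • y ≠ 0 := smul_ne_zero hc.ne' hy
  have h1 : HasFDerivAt (fun z => gradient H (c • z)) ((hA n H (c • y)).comp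
      (c • ContinuousLinearMap.id ℝ (Euc n))) y :=
    (h.G_fd hcy).comp y ((hasFDerivAt_id y).const_smul c)
  have h2 : HasFDerivAt (fun z => gradient H (c • z)) (hA n H y) y := by
    refine (h.G_fd hy).congr_of_eventuallyEq ?_
    filter_upwards [isOpen_compl_singleton.mem_nhds hy] with z hz
    exact h.G_homog hz hc
  have h3 := h1.unique h2
  rw [← h3]
  ext v
  simp [hc.ne']

lemma CBody.euler (h : CBody n H) {y : Euc n} (hy : y ≠ 0) : ⟪gradient H y, y⟫ = H y := by
  have h1 : HasDerivAt (fun c : ℝ => H (c • y)) ⟪gradient H y, y⟫ 1 := by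
    have := (h.H_grad (y := (1:ℝ) • y) (by simpa using hy)).comp_hasDerivAt (1:ℝ)
      ((hasDerivAt_id (1:ℝ)).smul_const y)
    simpa [Function.comp_def] using this
  have h2 : HasDerivAt (fun c : ℝ => H (c • y)) (H y) 1 := by
    have : HasDerivAt (fun c : ℝ => c * H y) (1 * H y) 1 := (hasDerivAt_id (1:ℝ)).mul_const (H y)
    rw [one_mul] at this
    refine this.congr_of_eventuallyEq ?_
    filter_upwards [lt_mem_nhds (zero_lt_one (α := ℝ))] with c hc
    exact h.homog c hc y
  exact h1.unique h2

lemma CBody.A_self (h : CBody n H) {y : Euc n} (hy : y ≠ 0) : hA n H y y = 0 := by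
  have h1 : HasDerivAt (fun c : ℝ => gradient H (c • y)) (hA n H y y) 1 := by
    have := (h.G_fd (y := (1:ℝ) • y) (by simpa using hy)).comp_hasDerivAt (1:ℝ)
      ((hasDerivAt_id (1:ℝ)).smul_const y)
    simpa [Function.comp_def] using this
  have h2 : HasDerivAt (fun c : ℝ => gradient H (c • y)) 0 1 := by
    refine (hasDerivAt_const (1:ℝ) (gradient H y)).congr_of_eventuallyEq ?_
    filter_upwards [lt_mem_nhds (zero_lt_one (α := ℝ))] with c hc
    exact h.G_homog hy hc
  exact h1.unique h2

lemma CBody.fderiv_inner (h : CBody n H) {y : Euc n} (hy : y ≠ 0) (v w : Euc n) :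
    fderiv ℝ (fderiv ℝ H) y v w = ⟪hA n H y v, w⟫ := by
  have e : fderiv ℝ H = fun z => InnerProductSpace.toDual ℝ (Euc n) (gradient H z) := by
    ext z v
    simp [gradient]
  have h1 := ((InnerProductSpace.toDual ℝ (Euc n)).toContinuousLinearEquiv.toContinuousLinearMap
    |>.hasFDerivAt (x := gradient H y)).comp y (h.G_fd hy)
  rw [e]
  erw [h1.fderiv]
  simp

lemma CBody.A_symm (h : CBody n H) {y : Euc n} (hy : y ≠ 0) (v w : Euc n) :
    ⟪hA n H y v, w⟫ = ⟪hA n H y w, v⟫ := by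
  rw [← h.fderiv_inner hy, ← h.fderiv_inner hy]
  exact (h.H_cd hy).isSymmSndFDerivAt (by simp only [minSmoothness_of_isRCLikeNormedField]; exact WithTop.coe_le_coe.2 le_top) v w

lemma CBody.ehess_eq (h : CBody n H) {y : Euc n} (hy : y ≠ 0) (i j : Fin (n+1)) :
    ehess n H y i j = ⟪hA n H y (EuclideanSpace.single i 1), EuclideanSpace.single j 1⟫ := by
  rw [← h.fderiv_inner hy]
  simp only [ehess, Matrix.of_apply]
  have h1 : DifferentiableAt ℝ (fderiv ℝ H) y :=
    ((h.H_cd hy).fderiv_right (m := 1) (WithTop.coe_le_coe.2 le_top)).differentiableAt one_ne_zero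
  rw [fderiv_clm_apply h1 (by fun_prop)]
  simp

lemma CBody.quad (h : CBody n H) {y : Euc n} (hy : y ≠ 0) (w : Euc n) :
    (w : Fin (n+1) → ℝ) ⬝ᵥ (bmat n H y *ᵥ w) = ⟪hA n H y w, w⟫ + H y * ⟪y, w⟫ ^ 2 := by
  have hw : w = ∑ i, w i • EuclideanSpace.single i (1:ℝ) := by
    ext j; simp [Finset.sum_apply, Pi.single_apply]
  have h1 : ⟪hA n H y w, w⟫ = ∑ i, ∑ j, w i * w j * ehess n H y i j := by
    conv_lhs => rw [hw]
    simp only [map_sum, map_smul, sum_inner, inner_sum, inner_smul_left, inner_smul_right]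
    refine Finset.sum_congr rfl fun i _ => ?_
    rw [Finset.mul_sum]
    refine Finset.sum_congr rfl fun j _ => ?_
    rw [h.ehess_eq hy, h.A_symm hy]
    simp only [conj_trivial]; ring
  have h2 : ⟪y, w⟫ = ∑ i, y i * w i := by
    simp [PiLp.inner_apply, mul_comm]
  rw [h1, h2, sq, Finset.sum_mul_sum, Finset.mul_sum, ← Finset.sum_add_distrib]
  simp only [dotProduct, mulVec, bmat, Matrix.add_apply, Matrix.of_apply]
  refine Finset.sum_congr rfl fun i _ => ?_
  rw [Finset.mul_sum, Finset.mul_sum, ← Finset.sum_add_distrib]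
  refine Finset.sum_congr rfl fun j _ => ?_
  ring

lemma CBody.H_pos (h : CBody n H) {y : Euc n} (hy : y ≠ 0) : 0 < H y := by
  have h1 := h.pos _ (unit_pi hy)
  rw [h.homog _ (by positivity)] at h1
  have : 0 < ‖y‖⁻¹ := by positivity
  exact pos_of_mul_pos_right h1 this.le

lemma CBody.B_pos (h : CBody n H) {x : Euc n} (hx : x ∈ sphere (0 : Euc n) 1) {w : Euc n}
    (hw : w ≠ 0) : 0 < ⟪hA n H x w, w⟫ + H x * ⟪x, w⟫ ^ 2 := by
  rw [← h.quad (unit_ne hx)]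
  have := (h.posdef x hx).dotProduct_mulVec_pos (x := (w : Fin (n+1) → ℝ))
    (by intro h0; apply hw; ext i; exact congrFun h0 i)
  simpa using this

/-- supporting hyperplane inequality -/
lemma CBody.support (h : CBody n H) {x : Euc n} (hx : x ≠ 0) (z : Euc n) :
    ⟪gradient H x, z⟫ ≤ H z := by
  have h1 : HasDerivAt (fun t : ℝ => H (x + t • (z - x))) ⟪gradient H x, z - x⟫ 0 := by
    have := (h.H_grad (y := x + (0:ℝ) • (z - x)) (by simpa using hx)).comp_hasDerivAt (0:ℝ)
      (((hasDerivAt_id (0:ℝ)).smul_const (z - x)).const_add x)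
    simpa [Function.comp_def] using this
  have hc : ConvexOn ℝ Set.univ (fun t : ℝ => H (x + t • (z - x))) := by
    have := h.conv.comp_affineMap (AffineMap.lineMap x z : ℝ →ᵃ[ℝ] Euc n)
    refine this.congr fun t _ => ?_
    simp [AffineMap.lineMap_apply, add_comm]
  have h2 := hc.le_slope_of_hasDerivAt (Set.mem_univ 0) (Set.mem_univ 1) one_pos h1
  simp only [slope, inner_sub_right, h.euler hx] at h2
  simp at h2
  rw [inner_gradient_left]; exact h2

/-- pure linear algebra: Jacobian determinant -/
lemma det_aux {m : ℕ} (S : Matrix (Fin m) (Fin m) ℝ) (x g : Fin m → ℝ) (t : ℝ) (ht : t ≠ 0)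
    (h1 : S *ᵥ x = 0) (h2 : x ᵥ* S = 0) (hx : x ⬝ᵥ x = 1) (hg : x ⬝ᵥ g = t) :
    (t • S + vecMulVec g g).det = t ^ m * (S + t • vecMulVec x x).det := by
  set L : Matrix (Fin m) (Fin m) ℝ := 1 + vecMulVec (t⁻¹ • g - x) x with hL
  have hdet : L.det = 1 := by
    have h3 := det_one_add_replicateCol_mul_replicateRow (ι := Fin 1) (t⁻¹ • g - x) x
    rw [← vecMulVec_eq] at h3
    rw [hL, h3, dotProduct_sub, dotProduct_smul, hx, hg]
    simp [ht]
  have e : t • S + vecMulVec g g = L * (t • (S + t • vecMulVec x x)) * Lᵀ := by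
    have e1 : L * S = S := by
      rw [hL, add_mul, one_mul, vecMulVec_mul, h2]; simp
    have e2 : S * Lᵀ = S := by
      rw [hL, transpose_add, transpose_one, mul_add, mul_one, transpose_vecMulVec, mul_vecMulVec, h1]
      simp
    have e3 : L *ᵥ x = t⁻¹ • g := by
      rw [hL, add_mulVec, one_mulVec, vecMulVec_mulVec, hx]; simp
    have e4 : L * vecMulVec x x * Lᵀ = vecMulVec (t⁻¹ • g) (t⁻¹ • g) := by
      rw [mul_vecMulVec, vecMulVec_mul, vecMul_transpose, e3]
    rw [Matrix.mul_smul, Matrix.smul_mul, mul_add, add_mul, e1, e2, Matrix.mul_smul, Matrix.smul_mul, e4, smul_add,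
      smul_vecMulVec, vecMulVec_smul]
    simp only [smul_smul]
    congr 1
    rw [show t * (t * (t⁻¹ * t⁻¹)) = 1 by field_simp]
    simp
  rw [e, det_mul, det_mul, det_transpose, hdet, det_smul]
  simp
end Calc

section Jac
open scoped ENNReal Topology ContDiff

/-- The map whose image of the unit `H`-ball is the convex body. -/
def hT (n : ℕ) (H : Euc n → ℝ) (y : Euc n) : Euc n := H y • gradient H y

/-- derivative of `hT` -/
def hDT (n : ℕ) (H : Euc n → ℝ) (y : Euc n) : Euc n →L[ℝ] Euc n :=
  H y • hA n H y + (innerSL ℝ (gradient H y)).smulRight (gradient H y)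

/-- density -/
def hD (n : ℕ) (H : Euc n → ℝ) (x : Euc n) : ℝ := (bmat n H x).det

variable {n : ℕ} {H : Euc n → ℝ}

lemma CBody.volDens_eq (h : CBody n H) {y : Euc n} (hy : y ≠ 0) : volDens n H y = hD n H y := by
  have := (h.H_pos hy).ne'
  simp only [volDens, sigman, hD]; field_simp

lemma CBody.hD_pos (h : CBody n H) {x : Euc n} (hx : x ∈ sphere (0 : Euc n) 1) : 0 < hD n H x :=
  (h.posdef x hx).det_pos

lemma CBody.hT_fd (h : CBody n H) {y : Euc n} (hy : y ≠ 0) :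
    HasFDerivAt (hT n H) (hDT n H y) y := (h.H_grad hy).smul (h.G_fd hy)

lemma CBody.hDT_homog (h : CBody n H) {y : Euc n} (hy : y ≠ 0) {c : ℝ} (hc : 0 < c) :
    hDT n H (c • y) = hDT n H y := by
  rw [hDT, hDT, h.homog c hc, h.A_homog hy hc, h.G_homog hy hc, smul_smul]
  congr 2
  field_simp

lemma CBody.mulVec_hess (h : CBody n H) {y : Euc n} (hy : y ≠ 0) (w : Euc n) (i : Fin (n+1)) :
    (ehess n H y *ᵥ w) i = hA n H y w i := by
  have hw : w = ∑ i, w i • EuclideanSpace.single i (1:ℝ) := by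
    ext j; simp [Finset.sum_apply, Pi.single_apply]
  conv_rhs => rw [hw]
  simp only [map_sum, map_smul, mulVec, dotProduct]
  simp only [WithLp.ofLp_sum, Finset.sum_apply, PiLp.smul_apply, smul_eq_mul]
  refine Finset.sum_congr rfl fun j _ => ?_
  rw [h.ehess_eq hy, h.A_symm hy]
  simp [EuclideanSpace.inner_single_right, mul_comm]

lemma CBody.hess_symm (h : CBody n H) {y : Euc n} (hy : y ≠ 0) :
    (ehess n H y)ᵀ = ehess n H y := by
  ext i j
  rw [transpose_apply, h.ehess_eq hy, h.A_symm hy, h.ehess_eq hy]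

lemma CBody.det_hDT_unit (h : CBody n H) {x : Euc n} (hx : x ∈ sphere (0 : Euc n) 1) :
    (hDT n H x).det = H x ^ (n+1) * hD n H x := by
  have hx0 := unit_ne hx
  have h1 : ehess n H x *ᵥ (x : Fin (n+1) → ℝ) = 0 := by
    ext i
    rw [h.mulVec_hess hx0, h.A_self hx0]; rfl
  have h2 : (x : Fin (n+1) → ℝ) ᵥ* ehess n H x = 0 := by
    rw [← mulVec_transpose, h.hess_symm hx0, h1]
  have hx1 : (x : Fin (n+1) → ℝ) ⬝ᵥ x = 1 := by
    have : ⟪x, x⟫ = 1 := by rw [real_inner_self_eq_norm_sq, mem_sphere_zero_iff_norm.1 hx]; norm_num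
    rw [← this]; simp only [PiLp.inner_apply, dotProduct]; simp [sq]
  have hg : (x : Fin (n+1) → ℝ) ⬝ᵥ (gradient H x).ofLp = H x := by
    rw [← h.euler hx0]
    rw [real_inner_comm]; simp only [PiLp.inner_apply, dotProduct]; simp [mul_comm]
  have key := det_aux (ehess n H x) x (gradient H x).ofLp (H x) (h.H_pos hx0).ne' h1 h2 hx1 hg
  have e1 : bmat n H x = ehess n H x + H x • vecMulVec (x : Fin (n+1) → ℝ) x := by
    ext i j; simp [bmat, vecMulVec_apply]
  rw [hD, e1, ← key, ContinuousLinearMap.det, ← LinearMap.det_toMatrix (EuclideanSpace.basisFun (Fin (n+1)) ℝ).toBasis]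
  congr 1
  ext i j
  rw [LinearMap.toMatrix_apply]
  simp only [hDT]
  have := h.ehess_eq hx0 i j
  rw [h.A_symm hx0] at this
  simp [vecMulVec_apply, this, EuclideanSpace.inner_single_right]
  rw [← inner_gradient_left, EuclideanSpace.inner_single_right]
  simp; ring

lemma CBody.det_hDT (h : CBody n H) {y : Euc n} (hy : y ≠ 0) :
    (hDT n H y).det = H (‖y‖⁻¹ • y) ^ (n+1) * hD n H (‖y‖⁻¹ • y) := by
  rw [← h.det_hDT_unit (unit_pi hy), h.hDT_homog hy (by positivity)]
end Jac

section Geo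
open scoped ENNReal Topology ContDiff

variable {n : ℕ} {H : Euc n → ℝ}

lemma CBody.G_strict (h : CBody n H) {y : Euc n} (hy : y ≠ 0) :
    HasStrictFDerivAt (gradient H) (hA n H y) y :=
  (h.G_cd hy).hasStrictFDerivAt (by simp)

lemma CBody.E_quad (h : CBody n H) {x0 : Euc n} (hx0 : x0 ≠ 0) {κ : ℝ} (hκ : 0 < κ) :
    ∀ᶠ p : Euc n × Euc n in 𝓝 (x0, x0),
      ⟪hA n H x0 (p.2 - p.1), p.2 - p.1⟫ / 2 - κ * ‖p.2 - p.1‖ ^ 2 ≤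
        H p.2 - ⟪gradient H p.1, p.2⟫ := by
  have h1 := (h.G_strict hx0).isLittleO.def hκ
  have h2 : ∀ᶠ p : Euc n × Euc n in 𝓝 (x0, x0), p.1 ≠ 0 ∧ p.2 ≠ 0 := by
    have a : ∀ᶠ p : Euc n × Euc n in 𝓝 (x0, x0), p.1 ≠ 0 :=
      continuousAt_fst.eventually_ne hx0
    have b : ∀ᶠ p : Euc n × Euc n in 𝓝 (x0, x0), p.2 ≠ 0 :=
      continuousAt_snd.eventually_ne hx0
    exact a.and b
  obtain ⟨ε, hε, hb⟩ := Metric.eventually_nhds_iff.1 (h1.and h2)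
  refine Metric.eventually_nhds_iff.2 ⟨ε, hε, ?_⟩
  rintro ⟨x, z⟩ hp
  rw [Prod.dist_eq, max_lt_iff] at hp
  obtain ⟨hx, hz⟩ := hp
  simp only at hx hz ⊢
  set w := z - x with hw
  have hseg : ∀ τ ∈ Set.Icc (0:ℝ) 1, dist (x + τ • w) x0 < ε := by
    intro τ hτ
    have := (convex_ball x0 ε).add_smul_sub_mem (x := x) (y := z) hx hz hτ
    exact this
  have hne : ∀ τ ∈ Set.Icc (0:ℝ) 1, x + τ • w ≠ 0 := by
    intro τ hτ
    exact (hb (y := (x + τ • w, x + τ • w)) (by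
      rw [Prod.dist_eq, max_lt_iff]; exact ⟨hseg τ hτ, hseg τ hτ⟩)).2.1
  set s := ⟪hA n H x0 w, w⟫ with hs
  have hder : ∀ τ ∈ Set.Icc (0:ℝ) 1, HasDerivAt (fun τ : ℝ => H (x + τ • w) - τ * ⟪gradient H x, w⟫
      - τ ^ 2 / 2 * (s - 2 * κ * ‖w‖ ^ 2))
      (⟪gradient H (x + τ • w), w⟫ - ⟪gradient H x, w⟫ - τ * (s - 2 * κ * ‖w‖ ^ 2)) τ := by
    intro τ hτ
    have a : HasDerivAt (fun τ : ℝ => H (x + τ • w)) ⟪gradient H (x + τ • w), w⟫ τ := by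
      have := (h.H_grad (hne τ hτ)).comp_hasDerivAt τ
        (((hasDerivAt_id τ).smul_const w).const_add x)
      simpa [Function.comp_def] using this
    have b : HasDerivAt (fun τ : ℝ => τ * ⟪gradient H x, w⟫) (⟪gradient H x, w⟫) τ := by
      simpa using (hasDerivAt_id τ).mul_const ⟪gradient H x, w⟫
    have c : HasDerivAt (fun τ : ℝ => τ ^ 2 / 2 * (s - 2 * κ * ‖w‖ ^ 2))
        (τ * (s - 2 * κ * ‖w‖ ^ 2)) τ := by
      have := ((hasDerivAt_pow 2 τ).div_const 2).mul_const (s - 2 * κ * ‖w‖ ^ 2)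
      refine this.congr_deriv ?_
      norm_num
    exact (a.sub b).sub c
  have hmono : MonotoneOn (fun τ : ℝ => H (x + τ • w) - τ * ⟪gradient H x, w⟫
      - τ ^ 2 / 2 * (s - 2 * κ * ‖w‖ ^ 2)) (Set.Icc 0 1) := by
    refine monotoneOn_of_deriv_nonneg (convex_Icc 0 1)
      (fun τ hτ => (hder τ hτ).continuousAt.continuousWithinAt)
      (fun τ hτ => (hder τ (interior_subset hτ)).differentiableAt.differentiableWithinAt) ?_
    intro τ hτ
    have hτ' := interior_subset hτ
    rw [(hder τ hτ').deriv]
    have e := (hb (y := (x + τ • w, x)) (by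
      rw [Prod.dist_eq, max_lt_iff]; exact ⟨hseg τ hτ', hx⟩)).1
    simp only [add_sub_cancel_left] at e
    have e2 : -(κ * ‖τ • w‖ * ‖w‖) ≤
        ⟪gradient H (x + τ • w) - gradient H x - hA n H x0 (τ • w), w⟫ := by
      have := abs_real_inner_le_norm (gradient H (x + τ • w) - gradient H x - hA n H x0 (τ • w)) w
      have h3 := mul_le_mul_of_nonneg_right e (norm_nonneg w)
      linarith [neg_abs_le ⟪gradient H (x + τ • w) - gradient H x - hA n H x0 (τ • w), w⟫]
    rw [inner_sub_left, inner_sub_left, map_smul, inner_smul_left, norm_smul, Real.norm_eq_abs,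
      abs_of_nonneg hτ'.1] at e2
    simp only [conj_trivial] at e2
    have : 0 ≤ κ * τ * ‖w‖ ^ 2 := by have := hτ'.1; positivity
    nlinarith
  have hfin := hmono (Set.left_mem_Icc.2 zero_le_one) (Set.right_mem_Icc.2 zero_le_one) zero_le_one
  simp only [zero_smul, add_zero, one_smul, hw, add_sub_cancel] at hfin
  rw [← hw, inner_sub_right, h.euler] at hfin
  · linarith
  · simpa using hne 0 (by simp)

lemma CBody.A_perp (h : CBody n H) {x : Euc n} (hx : x ≠ 0) (a : ℝ) (w : Euc n) :
    ⟪hA n H x (w - a • x), w - a • x⟫ = ⟪hA n H x w, w⟫ := by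
  have := h.A_symm hx w x
  simp [map_sub, h.A_self hx, inner_sub_right, inner_smul_right, this]

lemma CBody.A_nonneg (h : CBody n H) {x : Euc n} (hx : x ∈ sphere (0 : Euc n) 1) (w : Euc n) :
    0 ≤ ⟪hA n H x w, w⟫ := by
  have hx1 : ⟪x, x⟫ = 1 := by rw [real_inner_self_eq_norm_sq, mem_sphere_zero_iff_norm.1 hx]; norm_num
  rw [← h.A_perp (unit_ne hx) ⟪x, w⟫ w]
  rcases eq_or_ne (w - ⟪x, w⟫ • x) 0 with h0 | h0
  · rw [h0]; simp
  · have := h.B_pos hx h0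
    rw [show ⟪x, w - ⟪x, w⟫ • x⟫ = 0 by rw [inner_sub_right, inner_smul_right, hx1]; ring] at this
    simpa using this.le

lemma CBody.A_pos (h : CBody n H) {x : Euc n} (hx : x ∈ sphere (0 : Euc n) 1) {w : Euc n}
    (hw : w ≠ ⟪x, w⟫ • x) : 0 < ⟪hA n H x w, w⟫ := by
  have hx1 : ⟪x, x⟫ = 1 := by rw [real_inner_self_eq_norm_sq, mem_sphere_zero_iff_norm.1 hx]; norm_num
  rw [← h.A_perp (unit_ne hx) ⟪x, w⟫ w]
  have := h.B_pos hx (sub_ne_zero.2 hw)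
  rw [show ⟪x, w - ⟪x, w⟫ • x⟫ = 0 by rw [inner_sub_right, inner_smul_right, hx1]; ring] at this
  simpa using this

lemma CBody.E_pos (h : CBody n H) {x z : Euc n} (hx : x ∈ sphere (0 : Euc n) 1)
    (hz : z ∈ sphere (0 : Euc n) 1) (hxz : z ≠ x) : ⟪gradient H x, z⟫ < H z := by
  refine lt_of_le_of_ne (h.support (unit_ne hx) z) fun heq => ?_
  have hx1 : ‖x‖ = 1 := by simpa using hx
  have hz1 : ‖z‖ = 1 := by simpa using hz
  have hxx : ⟪x, x⟫ = 1 := by rw [real_inner_self_eq_norm_sq, hx1]; norm_num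
  by_cases hw : z - x = ⟪x, z - x⟫ • x
  · rw [inner_sub_right, hxx] at hw
    have e : z = ⟪x, z⟫ • x := by
      have : z = (z - x) + x := by abel
      rw [this, hw, sub_smul, one_smul]; simp [inner_smul_right, hx1]
    have e2 : |⟪x, z⟫| = 1 := by
      have := congrArg norm e
      rwa [norm_smul, hx1, hz1, mul_one, Real.norm_eq_abs, eq_comm] at this
    rcases (abs_eq zero_le_one).1 e2 with e3 | e3
    · rw [e3, one_smul] at e; exact hxz e
    · rw [e3] at e
      have p1 := h.H_pos (unit_ne hz)
      have p2 := h.H_pos (unit_ne hx)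
      have : ⟪gradient H x, z⟫ = - H x := by
        rw [← h.euler (unit_ne hx), e, inner_smul_right]; ring
      linarith
  · have hp := h.A_pos hx hw
    set u := z - x with hu
    have hun : 0 < ‖u‖ ^ 2 := by
      have : 0 < ‖u‖ := norm_pos_iff.2 (sub_ne_zero.2 hxz)
      positivity
    set κ := ⟪hA n H x u, u⟫ / (4 * ‖u‖ ^ 2) with hκ
    have hκp : 0 < κ := by positivity
    have ev := h.E_quad (unit_ne hx) hκp
    have ht : Filter.Tendsto (fun l : ℝ => (x, x + l • u)) (𝓝[>] 0) (𝓝 (x, x)) := by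
      have : Continuous (fun l : ℝ => (x, x + l • u)) := by fun_prop
      have := this.tendsto 0
      simp only [zero_smul, add_zero] at this
      exact this.mono_left nhdsWithin_le_nhds
    have hl : ∀ᶠ l : ℝ in 𝓝[>] 0, l < 1 := nhdsWithin_le_nhds (gt_mem_nhds one_pos)
    obtain ⟨l, ⟨hE, hl1⟩, hl0⟩ := (((ht.eventually ev).and hl).and self_mem_nhdsWithin).exists
    simp only [add_sub_cancel_left] at hE
    have hl0 : 0 < l := hl0
    have hcv : H (x + l • u) ≤ (1 - l) * H x + l * H z := by
      have := h.conv.2 (Set.mem_univ x) (Set.mem_univ z) (sub_nonneg.2 hl1.le) hl0.le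
        (by ring : 1 - l + l = 1)
      simp only [smul_eq_mul] at this
      refine le_trans (le_of_eq ?_) this
      congr 1
      rw [hu]; module
    rw [inner_add_right, h.euler (unit_ne hx), inner_smul_right, map_smul, inner_smul_left,
      inner_smul_right, norm_smul,
      show ⟪gradient H x, u⟫ = H z - H x by rw [hu, inner_sub_right, h.euler (unit_ne hx), heq]] at hE
    simp only [conj_trivial, Real.norm_eq_abs, mul_pow, sq_abs] at hE
    have e4 : κ * (l ^ 2 * ‖u‖ ^ 2) = l ^ 2 * (⟪hA n H x u, u⟫ / 4) := by
      have : ‖u‖ ≠ 0 := norm_ne_zero_iff.2 (sub_ne_zero.2 hxz)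
      rw [hκ]; field_simp [this]
    rw [e4] at hE
    have : 0 < l ^ 2 * (⟪hA n H x u, u⟫ / 4) := by positivity
    nlinarith
end Geo

section Vol
open scoped ENNReal Topology ContDiff

variable {n : ℕ} {H : Euc n → ℝ}

lemma CBody.H_co (h : CBody n H) : ContinuousOn H {0}ᶜ :=
  fun _ hy => (h.H_cd hy).continuousAt.continuousWithinAt

lemma CBody.G_co (h : CBody n H) : ContinuousOn (gradient H) {0}ᶜ :=
  fun _ hy => (h.G_cd hy).continuousAt.continuousWithinAt

lemma CBody.A_co (h : CBody n H) : ContinuousOn (hA n H) {0}ᶜ :=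
  fun _ hy => (h.A_cd hy).continuousAt.continuousWithinAt

lemma CBody.bmat_cd (h : CBody n H) {y : Euc n} (hy : y ≠ 0) (i j : Fin (n+1)) :
    ContDiffAt ℝ ∞ (fun y => bmat n H y i j) y := by
  have h1 : ContDiffAt ℝ ∞ (fun y : Euc n =>
      ⟪hA n H y (EuclideanSpace.single i 1), EuclideanSpace.single j 1⟫ + H y * (y i * y j)) y := by
    have a : ContDiffAt ℝ ∞ (fun y => hA n H y (EuclideanSpace.single i 1)) y :=
      (h.A_cd hy).clm_apply contDiffAt_const
    have b : ∀ k, ContDiffAt ℝ ∞ (fun y : Euc n => y k) y := by intro k; fun_prop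
    exact (a.inner ℝ contDiffAt_const).add ((h.H_cd hy).mul ((b i).mul (b j)))
  refine h1.congr_of_eventuallyEq ?_
  filter_upwards [isOpen_compl_singleton.mem_nhds hy] with z hz
  rw [bmat, Matrix.add_apply, h.ehess_eq hz]; rfl

lemma CBody.hD_cd (h : CBody n H) {y : Euc n} (hy : y ≠ 0) : ContDiffAt ℝ ∞ (hD n H) y := by
  have : hD n H = fun y => ∑ σ : Equiv.Perm (Fin (n+1)),
      ((Equiv.Perm.sign σ : ℤ) : ℝ) * ∏ i, bmat n H y (σ i) i := by
    ext y; rw [hD, det_apply']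
  rw [this]
  refine ContDiffAt.sum fun σ _ => contDiffAt_const.mul ?_
  exact contDiffAt_prod fun i _ => h.bmat_cd hy _ _

lemma CBody.hD_co (h : CBody n H) : ContinuousOn (hD n H) {0}ᶜ :=
  fun _ hy => (h.hD_cd hy).continuousAt.continuousWithinAt

lemma sph_sub : sphere (0 : Euc n) 1 ⊆ {0}ᶜ := fun _ hx => unit_ne hx

lemma CBody.T_inj (h : CBody n H) : Set.InjOn (hT n H) {0}ᶜ := by
  have key : ∀ y y' : Euc n, y ≠ 0 → y' ≠ 0 → hT n H y = hT n H y' → H y ≤ H y' := by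
    intro y y' hy hy' e
    have s := h.support hy' y
    have e1 : ⟪hT n H y, y⟫ = ⟪hT n H y', y⟫ := by rw [e]
    simp only [hT, inner_smul_left, h.euler hy, conj_trivial] at e1
    have p := h.H_pos hy
    have p' := h.H_pos hy'
    have : H y * H y ≤ H y' * H y := by rw [e1]; exact mul_le_mul_of_nonneg_left s p'.le
    exact le_of_mul_le_mul_right this p
  intro y hy y' hy' e
  have eH : H y = H y' := le_antisymm (key y y' hy hy' e) (key y' y hy' hy e.symm)
  have eG : gradient H y = gradient H y' := by
    simp only [hT, eH] at e
    exact smul_right_injective _ (h.H_pos hy').ne' e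
  have hn : 0 < ‖y‖⁻¹ := inv_pos.2 (norm_pos_iff.2 hy)
  have hn' : 0 < ‖y'‖⁻¹ := inv_pos.2 (norm_pos_iff.2 hy')
  have ex : ‖y'‖⁻¹ • y' = ‖y‖⁻¹ • y := by
    by_contra hne
    have := h.E_pos (unit_pi hy) (unit_pi hy') hne
    rw [h.G_homog hy hn, eG, inner_smul_right, h.homog _ hn', h.euler hy'] at this
    exact lt_irrefl _ this
  have e1 : ‖y'‖⁻¹ * H y' = ‖y‖⁻¹ * H y := by
    rw [← h.homog _ hn, ← h.homog _ hn', ex]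
  rw [eH] at e1
  have e2 := mul_right_cancel₀ (h.H_pos hy').ne' e1
  rw [e2] at ex
  exact (smul_right_injective _ hn.ne' ex).symm

/-- star-shaped domain -/
def hW (n : ℕ) (H ρ : Euc n → ℝ) : Set (Euc n) :=
  {y | y ≠ 0 ∧ ‖y‖ < ρ (‖y‖⁻¹ • y) / H (‖y‖⁻¹ • y)}

lemma pi_co : ContinuousOn (fun y : Euc n => ‖y‖⁻¹ • y) {0}ᶜ := by
  have h1 : ContinuousOn (fun y : Euc n => ‖y‖⁻¹) {0}ᶜ :=
    ContinuousOn.inv₀ (f := fun y : Euc n => ‖y‖) (by fun_prop) fun y hy => norm_ne_zero_iff.2 hy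
  exact h1.smul continuousOn_id

lemma CBody.hW_meas (h : CBody n H) {ρ : Euc n → ℝ} (hρ : ContinuousOn ρ (sphere 0 1)) :
    MeasurableSet (hW n H ρ) := by
  have h1 : ContinuousOn (fun y : Euc n => ρ (‖y‖⁻¹ • y) / H (‖y‖⁻¹ • y) - ‖y‖) {0}ᶜ := by
    refine ContinuousOn.sub ?_ continuous_norm.continuousOn
    refine ContinuousOn.div (hρ.comp pi_co fun y hy => unit_pi hy)
      ((h.H_co.mono sph_sub).comp pi_co fun y hy => unit_pi hy) ?_
    intro y hy
    exact (h.pos _ (unit_pi hy)).ne'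
  have := h1.isOpen_inter_preimage isOpen_compl_singleton (isOpen_Ioi (a := (0:ℝ)))
  convert this.measurableSet using 1
  ext y
  simp [hW]

lemma CBody.hW_image_meas (h : CBody n H) {ρ : Euc n → ℝ} (hρ : ContinuousOn ρ (sphere 0 1)) :
    MeasurableSet (hT n H '' hW n H ρ) :=
  measurable_image_of_fderivWithin (h.hW_meas hρ)
    (fun _ hy => (h.hT_fd hy.1).hasFDerivWithinAt) (h.T_inj.mono fun _ hy => hy.1)

lemma CBody.vol_image (h : CBody n H) {ρ : Euc n → ℝ} (hρ : ContinuousOn ρ (sphere 0 1))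
    (hρ0 : ∀ x ∈ sphere (0 : Euc n) 1, 0 < ρ x) :
    volume (hT n H '' hW n H ρ) =
      ∫⁻ x : sphere (0 : Euc n) 1, ENNReal.ofReal (ρ x ^ (n+1) * hD n H x / (n+1)) ∂sphMeasure n := by
  rw [← lintegral_abs_det_fderiv_eq_addHaar_image volume (h.hW_meas hρ)
    (fun y hy => (h.hT_fd hy.1).hasFDerivWithinAt) (h.T_inj.mono fun _ hy => hy.1)]
  have e1 : ∫⁻ y in hW n H ρ, ENNReal.ofReal |(hDT n H y).det| =
      ∫⁻ y in hW n H ρ, (fun x => ENNReal.ofReal (H x ^ (n+1) * hD n H x)) (‖y‖⁻¹ • y) := by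
    refine setLIntegral_congr_fun (h.hW_meas hρ) fun y hy => ?_
    simp only
    rw [h.det_hDT hy.1, abs_of_nonneg]
    have := h.pos _ (unit_pi hy.1)
    have := h.hD_pos (unit_pi hy.1)
    positivity
  rw [e1]
  have cH : Continuous fun x : sphere (0 : Euc n) 1 => H x :=
    (h.H_co.mono sph_sub).comp_continuous continuous_subtype_val fun x => x.2
  have cD : Continuous fun x : sphere (0 : Euc n) 1 => hD n H x :=
    (h.hD_co.mono sph_sub).comp_continuous continuous_subtype_val fun x => x.2
  have cρ : Continuous fun x : sphere (0 : Euc n) 1 => ρ x :=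
    hρ.comp_continuous continuous_subtype_val fun x => x.2
  have := polar_star n (fun x => ENNReal.ofReal (H x ^ (n+1) * hD n H x)) (fun x => ρ x / H x)
    (ENNReal.continuous_ofReal.comp ((cH.pow _).mul cD)).measurable
    (cρ.measurable.div cH.measurable) (fun x hx => div_pos (hρ0 x hx) (h.pos x hx)) (h.hW_meas hρ)
  rw [hW, this]
  refine lintegral_congr fun x => ?_
  have p1 := h.pos _ x.2
  have p2 := h.hD_pos x.2
  rw [← ENNReal.ofReal_mul (by positivity)]
  congr 1
  rw [div_pow]
  field_simp

lemma CBody.body_sub (h : CBody n H) {y : Euc n} (hy : y ≠ 0)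
    (hK : ∀ z ∈ sphere (0 : Euc n) 1, ⟪z, y⟫ < H z) : y ∈ hT n H '' hW n H (fun _ => 1) := by
  have hco : ContinuousOn (fun z : Euc n => ⟪z, y⟫ / H z) (sphere 0 1) :=
    ContinuousOn.div (by fun_prop) (h.H_co.mono sph_sub) fun z hz => (h.pos z hz).ne'
  obtain ⟨z0, hz0, hmax⟩ := (isCompact_sphere (0 : Euc n) 1).exists_isMaxOn
    ⟨_, unit_pi hy⟩ hco
  set m := ⟪z0, y⟫ / H z0 with hm
  have hm1 : m < 1 := by rw [hm, div_lt_one (h.pos z0 hz0)]; exact hK z0 hz0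
  have hm0 : 0 < m := by
    have := hmax (unit_pi hy)
    refine lt_of_lt_of_le ?_ this
    have p := h.pos _ (unit_pi hy)
    refine div_pos ?_ p
    rw [inner_smul_left, real_inner_self_eq_norm_sq]
    have : 0 < ‖y‖ := norm_pos_iff.2 hy
    simp only [conj_trivial]; positivity
  have hz0' := unit_ne hz0
  have hnn : ∀ z : Euc n, z ≠ 0 → 0 ≤ m * H z - ⟪z, y⟫ := by
    intro z hz
    have := hmax (unit_pi hz)
    have hn : 0 < ‖z‖⁻¹ := inv_pos.2 (norm_pos_iff.2 hz)
    simp only [Set.mem_ofPred_eq] at this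
    rw [div_le_iff₀ (h.pos _ (unit_pi hz)), h.homog _ hn, inner_smul_left] at this
    simp only [conj_trivial] at this
    rw [← hm] at this
    have h3 : ‖z‖⁻¹ * ⟪z, y⟫ ≤ ‖z‖⁻¹ * (m * H z) := by linarith
    linarith [le_of_mul_le_mul_left h3 hn]
  have h00 : m * H z0 - ⟪z0, y⟫ = 0 := by rw [hm]; field_simp [(h.pos z0 hz0).ne']; ring
  have hmin : IsLocalMin (fun z => m * H z - ⟪y, z⟫) z0 := by
    filter_upwards [isOpen_compl_singleton.mem_nhds hz0'] with z hz
    rw [real_inner_comm z0 y, real_inner_comm z y, h00]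
    exact hnn z hz
  have hd : HasFDerivAt (fun z => m * H z - ⟪y, z⟫) (m • innerSL ℝ (gradient H z0) - innerSL ℝ y) z0 :=
    ((h.H_grad hz0').const_mul m).sub (innerSL ℝ y).hasFDerivAt
  have hd0 := hmin.hasFDerivAt_eq_zero hd
  have ey : m • gradient H z0 = y := by
    refine ext_inner_right ℝ fun v => ?_
    have := congrArg (fun L => L v) hd0
    simp only [_root_.sub_apply, _root_.smul_apply, innerSL_apply_apply,
      _root_.zero_apply, smul_eq_mul] at this
    rw [inner_smul_left]; simp only [conj_trivial]; linarith
  have p0 := h.pos z0 hz0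
  have hc : 0 < m / H z0 := by positivity
  have hz1 : ‖z0‖ = 1 := by simpa using hz0
  have hnorm : ‖(m / H z0) • z0‖ = m / H z0 := by
    rw [norm_smul, hz1, mul_one, Real.norm_eq_abs, abs_of_pos hc]
  refine ⟨(m / H z0) • z0, ⟨smul_ne_zero hc.ne' hz0', ?_⟩, ?_⟩
  · rw [hnorm, smul_smul, inv_mul_cancel₀ hc.ne', one_smul]
    gcongr
  · rw [hT, h.homog _ hc, h.G_homog hz0' hc, ← ey]
    congr 1
    field_simp

lemma CBody.bm_app (h : CBody n H) {R R' g : Euc n → ℝ} (hR : ContinuousOn R (sphere 0 1))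
    (hR' : ContinuousOn R' (sphere 0 1)) (hR0 : ∀ x ∈ sphere (0 : Euc n) 1, 0 < R x)
    (hR0' : ∀ x ∈ sphere (0 : Euc n) 1, 0 < R' x)
    (hg : ∀ x ∈ sphere (0 : Euc n) 1, 0 < g x ∧ g x < 2)
    (h1 : ∀ x ∈ sphere (0 : Euc n) 1, ∀ z ∈ sphere (0 : Euc n) 1,
      R x * ⟪gradient H x, z⟫ ≤ H z * g z)
    (h2 : ∀ x ∈ sphere (0 : Euc n) 1, ∀ z ∈ sphere (0 : Euc n) 1,
      R' x * ⟪gradient H x, z⟫ ≤ H z * (2 - g z)) :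
    (∫ x : sphere (0 : Euc n) 1, R x ^ (n+1) * hD n H x ∂sphMeasure n) *
    (∫ x : sphere (0 : Euc n) 1, R' x ^ (n+1) * hD n H x ∂sphMeasure n) ≤
    (∫ x : sphere (0 : Euc n) 1, hD n H x ∂sphMeasure n) ^ 2 := by
  have aux : ∀ {ρ k : Euc n → ℝ}, (∀ x ∈ sphere (0 : Euc n) 1, 0 < k x) →
      (∀ x ∈ sphere (0 : Euc n) 1, ∀ z ∈ sphere (0 : Euc n) 1,
      ρ x * ⟪gradient H x, z⟫ ≤ H z * k z) → ∀ a ∈ hT n H '' hW n H ρ,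
      ∀ z ∈ sphere (0 : Euc n) 1, ⟪a, z⟫ < H z * k z := by
    rintro ρ k hk hh a ⟨y, hy, rfl⟩ z hz
    have hn : 0 < ‖y‖ := norm_pos_iff.2 hy.1
    have hu := unit_pi hy.1
    have hyu : y = ‖y‖ • (‖y‖⁻¹ • y) := by rw [smul_smul, mul_inv_cancel₀ hn.ne', one_smul]
    have e : hT n H y = (‖y‖ * H (‖y‖⁻¹ • y)) • gradient H (‖y‖⁻¹ • y) := by
      rw [hT]; conv_lhs => rw [hyu, h.homog _ hn, h.G_homog (unit_ne hu) hn]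
    have hlt := (lt_div_iff₀ (h.pos _ hu)).1 hy.2
    rw [e, inner_smul_left]
    simp only [conj_trivial]
    rcases lt_or_ge 0 ⟪gradient H (‖y‖⁻¹ • y), z⟫ with h0 | h0
    · exact lt_of_lt_of_le (mul_lt_mul_of_pos_right hlt h0) (hh _ hu z hz)
    · have := mul_pos (h.pos z hz) (hk z hz)
      refine lt_of_le_of_lt (mul_nonpos_of_nonneg_of_nonpos ?_ h0) this
      exact (mul_pos hn (h.pos _ hu)).le
  have c1 : ContinuousOn (fun _ : Euc n => (1:ℝ)) (sphere 0 1) := continuousOn_const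
  have key := bm_euc (n+1) (hT n H '' hW n H R) (hT n H '' hW n H R')
    ({0} ∪ hT n H '' hW n H (fun _ => 1)) (h.hW_image_meas hR) (h.hW_image_meas hR')
    ((measurableSet_singleton _).union (h.hW_image_meas c1)) (by
      intro a ha b hb
      rcases eq_or_ne ((2:ℝ)⁻¹ • (a + b)) 0 with h0 | h0
      · left; exact h0
      · right
        refine h.body_sub h0 fun z hz => ?_
        have i1 := aux (fun x hx => (hg x hx).1) h1 a ha z hz
        have i2 := aux (k := fun z => 2 - g z) (fun x hx => by linarith [(hg x hx).2]) h2 b hb z hz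
        rw [real_inner_comm, inner_smul_left, inner_add_left]
        simp only [conj_trivial]
        nlinarith)
  have hle : volume ({0} ∪ hT n H '' hW n H (fun _ => 1)) ≤ volume (hT n H '' hW n H (fun _ => 1)) := by
    refine (measure_union_le _ _).trans ?_
    simp
  have key2 := key.trans (pow_le_pow_left' hle 2)
  rw [h.vol_image hR hR0, h.vol_image hR' hR0', h.vol_image c1 (fun _ _ => one_pos)] at key2
  have cD : Continuous fun x : sphere (0 : Euc n) 1 => hD n H x :=
    (h.hD_co.mono sph_sub).comp_continuous continuous_subtype_val fun x => x.2
  have conv : ∀ {ρ : Euc n → ℝ}, ContinuousOn ρ (sphere 0 1) →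
      (∀ x ∈ sphere (0 : Euc n) 1, 0 < ρ x) →
      ∫⁻ x : sphere (0 : Euc n) 1, ENNReal.ofReal (ρ x ^ (n+1) * hD n H x / (n+1)) ∂sphMeasure n
      = ENNReal.ofReal ((∫ x : sphere (0 : Euc n) 1, ρ x ^ (n+1) * hD n H x ∂sphMeasure n) / (n+1))
      ∧ 0 ≤ ∫ x : sphere (0 : Euc n) 1, ρ x ^ (n+1) * hD n H x ∂sphMeasure n := by
    intro ρ hρ hρ0
    have cρ : Continuous fun x : sphere (0 : Euc n) 1 => ρ x :=
      hρ.comp_continuous continuous_subtype_val fun x => x.2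
    have nn : ∀ x : sphere (0 : Euc n) 1, 0 ≤ ρ x ^ (n+1) * hD n H x := fun x =>
      mul_nonneg (pow_nonneg (hρ0 x x.2).le _) (h.hD_pos x.2).le
    refine ⟨?_, integral_nonneg nn⟩
    rw [← integral_div, ofReal_integral_eq_lintegral_ofReal]
    · have : IsFiniteMeasure (sphMeasure n) := by unfold sphMeasure; infer_instance
      exact (((cρ.pow _).mul cD).div_const _).integrable_of_hasCompactSupport
        (HasCompactSupport.of_compactSpace _)
    · exact Filter.Eventually.of_forall fun x => div_nonneg (nn x) (by positivity)
  obtain ⟨e1, p1⟩ := conv hR hR0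
  obtain ⟨e2, p2⟩ := conv hR' hR0'
  obtain ⟨e3, p3⟩ := conv c1 (fun _ _ => one_pos)
  rw [e1, e2, e3, ← ENNReal.ofReal_mul (by positivity), ← ENNReal.ofReal_pow (by positivity),
    ENNReal.ofReal_le_ofReal_iff (by positivity)] at key2
  simp only [one_pow, one_mul] at key2
  rw [div_mul_div_comm, div_pow, ← sq, div_le_div_iff_of_pos_right (by positivity)] at key2
  exact key2
end Vol

section Loc
open scoped ENNReal Topology ContDiff

variable {n : ℕ} {H : Euc n → ℝ}

lemma alg_disc {σ y hz B C α : ℝ} (hα : 0 < α) (hh : 0 < hz) (hB : hz * B ^ 2 ≤ α * C) :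
    0 ≤ α * σ ^ 2 / 2 - y * hz * B * σ + y ^ 2 * hz * C / 2 := by
  have h1 : 0 ≤ (α * σ - y * hz * B) ^ 2 / 2 + y ^ 2 * hz * (α * C - hz * B ^ 2) / 2 := by
    have := sub_nonneg.2 hB
    positivity
  have h2 : α * (α * σ ^ 2 / 2 - y * hz * B * σ + y ^ 2 * hz * C / 2) =
    (α * σ - y * hz * B) ^ 2 / 2 + y ^ 2 * hz * (α * C - hz * B ^ 2) / 2 := by ring
  rw [← h2] at h1
  exact nonneg_of_mul_nonneg_right h1 hα

lemma CBody.A_cs (h : CBody n H) {x : Euc n} (hx : x ∈ sphere (0 : Euc n) 1) (v w : Euc n) :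
    ⟪hA n H x v, w⟫ ^ 2 ≤ ⟪hA n H x v, v⟫ * ⟪hA n H x w, w⟫ := by
  have h1 : ∀ t : ℝ, 0 ≤ ⟪hA n H x v, v⟫ * (t * t) + (2 * ⟪hA n H x v, w⟫) * t + ⟪hA n H x w, w⟫ := by
    intro t
    have := h.A_nonneg hx (t • v + w)
    simp only [map_add, map_smul, inner_add_left, inner_add_right, inner_smul_left, inner_smul_right,
      conj_trivial] at this
    rw [h.A_symm (unit_ne hx) w v] at this
    linarith
  have := discrim_le_zero h1
  rw [discrim] at this
  linarith

lemma CBody.B_lower (h : CBody n H) {x : Euc n} (hx : x ∈ sphere (0 : Euc n) 1) :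
    ∃ c > 0, ∀ w : Euc n, c * ‖w‖ ^ 2 ≤ ⟪hA n H x w, w⟫ + H x * ⟪x, w⟫ ^ 2 := by
  have hco : ContinuousOn (fun w : Euc n => ⟪hA n H x w, w⟫ + H x * ⟪x, w⟫ ^ 2) (sphere 0 1) := by
    fun_prop
  obtain ⟨w0, hw0, hmin⟩ := (isCompact_sphere (0 : Euc n) 1).exists_isMinOn ⟨x, hx⟩ hco
  refine ⟨_, h.B_pos hx (unit_ne hw0), fun w => ?_⟩
  rcases eq_or_ne w 0 with rfl | hw
  · simp
  have := hmin (unit_pi hw)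
  simp only [Set.mem_ofPred_eq] at this
  have hn : 0 < ‖w‖ := norm_pos_iff.2 hw
  have e : ⟪hA n H x (‖w‖⁻¹ • w), ‖w‖⁻¹ • w⟫ + H x * ⟪x, ‖w‖⁻¹ • w⟫ ^ 2 =
      (⟪hA n H x w, w⟫ + H x * ⟪x, w⟫ ^ 2) / ‖w‖ ^ 2 := by
    simp only [map_smul, inner_smul_left, inner_smul_right, conj_trivial]
    field_simp
  rw [e, le_div_iff₀ (by positivity)] at this
  exact this

lemma CBody.s_lower (h : CBody n H) {x0 : Euc n} (hx0 : x0 ∈ sphere (0 : Euc n) 1) :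
    ∃ c > 0, ∀ᶠ p : Euc n × Euc n in 𝓝 (x0, x0), p.1 ∈ sphere (0 : Euc n) 1 →
      p.2 ∈ sphere (0 : Euc n) 1 →
      c * ‖p.2 - p.1‖ ^ 2 ≤ ⟪hA n H x0 (p.2 - p.1), p.2 - p.1⟫ := by
  obtain ⟨c, hc, hb⟩ := h.B_lower hx0
  have h0 := h.pos x0 hx0
  refine ⟨c / 2, by positivity, ?_⟩
  have hcont : ContinuousAt (fun p : Euc n × Euc n => H x0 * (‖x0 - p.1‖ + ‖p.2 - p.1‖ / 2) ^ 2) (x0, x0) := by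
    fun_prop
  have hlt : ∀ᶠ p : Euc n × Euc n in 𝓝 (x0, x0), H x0 * (‖x0 - p.1‖ + ‖p.2 - p.1‖ / 2) ^ 2 < c / 2 := by
    refine hcont.eventually_lt continuousAt_const ?_
    simp; exact hc
  filter_upwards [hlt] with p hp h1 h2
  obtain ⟨x, z⟩ := p
  simp only at *
  set w := z - x with hw
  have hxw : ⟪x, w⟫ = - ‖w‖ ^ 2 / 2 := by
    have e1 : ‖x‖ = 1 := by simpa using h1
    have e2 : ‖z‖ = 1 := by simpa using h2
    have e3 : ‖w‖ ^ 2 = 2 - 2 * ⟪x, z⟫ := by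
      rw [hw, norm_sub_sq_real, e1, e2, real_inner_comm]; ring
    rw [hw, inner_sub_right, ← hw, e3, real_inner_self_eq_norm_sq, e1]; ring
  have hx0w : |⟪x0, w⟫| ≤ (‖x0 - x‖ + ‖w‖ / 2) * ‖w‖ := by
    have e : ⟪x0, w⟫ = ⟪x0 - x, w⟫ + ⟪x, w⟫ := by rw [inner_sub_left]; ring
    rw [e, hxw]
    refine (abs_add_le _ _).trans ?_
    have := abs_real_inner_le_norm (x0 - x) w
    rw [show |(- ‖w‖ ^ 2 / 2)| = ‖w‖ ^ 2 / 2 by rw [neg_div, abs_neg, abs_of_nonneg (by positivity)]]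
    nlinarith
  have hsq : ⟪x0, w⟫ ^ 2 ≤ ((‖x0 - x‖ + ‖w‖ / 2) * ‖w‖) ^ 2 := by
    rw [← sq_abs]; exact pow_le_pow_left₀ (abs_nonneg _) hx0w 2
  have := hb w
  have h5 := mul_le_mul_of_nonneg_left hsq h0.le
  have h6 := mul_le_mul_of_nonneg_right hp.le (sq_nonneg ‖w‖)
  nlinarith

/-- the perturbed function -/
def hR (n : ℕ) (H F : Euc n → ℝ) (v : Euc n → Euc n) (η t : ℝ) (x : Euc n) : ℝ :=
  1 + t * F x - t ^ 2 / 2 * (H x * ⟪hA n H x (v x), v x⟫ + η)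

lemma CBody.exists_kappa {h0 q0 η c : ℝ} (hh : 0 < h0) (hq : 0 ≤ q0) (hη : 0 < η) (hc : 0 < c) :
    ∃ κ > 0, κ < 1 ∧ 0 < (1 - κ) * (1 - 2 * κ / c) ∧ 0 < 1 - 2 * κ / c ∧
      (h0 + κ) * (√(q0 / h0) + κ / √c) ^ 2 ≤ (1 - κ) * (1 - 2 * κ / c) * (q0 + η / 2) := by
  have e1 : ∀ᶠ κ : ℝ in 𝓝[>] 0, κ < 1 := nhdsWithin_le_nhds (gt_mem_nhds one_pos)
  have e2 : ∀ᶠ κ : ℝ in 𝓝[>] 0, (0:ℝ) < (1 - κ) * (1 - 2 * κ / c) := by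
    refine nhdsWithin_le_nhds ?_
    have : ContinuousAt (fun κ : ℝ => (1 - κ) * (1 - 2 * κ / c)) 0 := by fun_prop
    exact continuousAt_const.eventually_lt this (by simp)
  have e3 : ∀ᶠ κ : ℝ in 𝓝[>] 0, (0:ℝ) < 1 - 2 * κ / c := by
    refine nhdsWithin_le_nhds ?_
    have : ContinuousAt (fun κ : ℝ => (1 - 2 * κ / c)) 0 := by fun_prop
    exact continuousAt_const.eventually_lt this (by simp)
  have e4 : ∀ᶠ κ : ℝ in 𝓝[>] 0, (h0 + κ) * (√(q0 / h0) + κ / √c) ^ 2 <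
      (1 - κ) * (1 - 2 * κ / c) * (q0 + η / 2) := by
    refine nhdsWithin_le_nhds ?_
    have a : ContinuousAt (fun κ : ℝ => (h0 + κ) * (√(q0 / h0) + κ / √c) ^ 2) 0 := by fun_prop
    have b : ContinuousAt (fun κ : ℝ => (1 - κ) * (1 - 2 * κ / c) * (q0 + η / 2)) 0 := by fun_prop
    refine a.eventually_lt b ?_
    simp only [add_zero, zero_div, mul_zero, sub_zero, mul_one, one_mul]
    rw [Real.sq_sqrt (by positivity), mul_div_cancel₀ _ hh.ne']
    linarith
  obtain ⟨κ, ⟨⟨⟨h1, h2⟩, h3⟩, h4⟩, h5⟩ := ((((e1.and e2).and e3).and e4).and self_mem_nhdsWithin).exists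
  exact ⟨κ, h5, h1, h2, h3, h4.le⟩

lemma CBody.claim_near (h : CBody n H) {F : Euc n → ℝ} {v : Euc n → Euc n} {x0 : Euc n}
    (hx0 : x0 ∈ sphere (0 : Euc n) 1)
    (hF : HasStrictFDerivAt F (innerSL ℝ (hA n H x0 (v x0))) x0)
    (hv : ContinuousAt v x0) {η : ℝ} (hη : 0 < η) :
    ∀ᶠ p : ℝ × (Euc n × Euc n) in 𝓝 (0, (x0, x0)), p.2.1 ∈ sphere (0 : Euc n) 1 →
      p.2.2 ∈ sphere (0 : Euc n) 1 →
      hR n H F v η p.1 p.2.1 * ⟪gradient H p.2.1, p.2.2⟫ ≤ H p.2.2 * (1 + p.1 * F p.2.2) := by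
  have hne := unit_ne hx0
  have h0 := h.pos x0 hx0
  have hqc : ContinuousAt (fun x => H x * ⟪hA n H x (v x), v x⟫) x0 :=
    (h.H_cd hne).continuousAt.mul ((((h.A_cd hne).continuousAt).clm_apply hv).inner hv)
  set q0 := H x0 * ⟪hA n H x0 (v x0), v x0⟫ with hq0
  have hq0n : 0 ≤ q0 := mul_nonneg h0.le (h.A_nonneg hx0 _)
  obtain ⟨c, hc, hs⟩ := h.s_lower hx0
  obtain ⟨κ, hκ, hκ1, hα, hα', hκB⟩ := CBody.exists_kappa h0 hq0n hη hc
  have cx : ContinuousAt (fun p : ℝ × (Euc n × Euc n) => p.2.1) (0, (x0, x0)) := by fun_prop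
  have cz : ContinuousAt (fun p : ℝ × (Euc n × Euc n) => p.2.2) (0, (x0, x0)) := by fun_prop
  have ct : ContinuousAt (fun p : ℝ × (Euc n × Euc n) => p.1) (0, (x0, x0)) := by fun_prop
  have cp : ContinuousAt (fun p : ℝ × (Euc n × Euc n) => p.2) (0, (x0, x0)) := by fun_prop
  have cR : ContinuousAt (fun p : ℝ × (Euc n × Euc n) => hR n H F v η p.1 p.2.1) (0, (x0, x0)) := by
    have a : ContinuousAt (fun p : ℝ × (Euc n × Euc n) => F p.2.1) (0, (x0, x0)) :=
      ContinuousAt.comp (f := fun p : ℝ × (Euc n × Euc n) => p.2.1) (g := F) hF.continuousAt cx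
    have b : ContinuousAt (fun p : ℝ × (Euc n × Euc n) => H p.2.1 * ⟪hA n H p.2.1 (v p.2.1), v p.2.1⟫) (0, (x0, x0)) :=
      ContinuousAt.comp (f := fun p : ℝ × (Euc n × Euc n) => p.2.1)
        (g := fun x => H x * ⟪hA n H x (v x), v x⟫) hqc cx
    unfold hR
    exact (continuousAt_const.add (ct.mul a)).sub (((ct.pow 2).div_const 2).mul (b.add continuousAt_const))
  have ev1 : ∀ᶠ p : ℝ × (Euc n × Euc n) in 𝓝 (0, (x0, x0)), 1 - κ < hR n H F v η p.1 p.2.1 :=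
    continuousAt_const.eventually_lt cR (by simp [hR, hκ])
  have ev2 : ∀ᶠ p : ℝ × (Euc n × Euc n) in 𝓝 (0, (x0, x0)),
      q0 - η / 2 < H p.2.1 * ⟪hA n H p.2.1 (v p.2.1), v p.2.1⟫ :=
    cx.eventually (continuousAt_const.eventually_lt hqc (by simp only [← hq0]; linarith))
  have ev3 : ∀ᶠ p : ℝ × (Euc n × Euc n) in 𝓝 (0, (x0, x0)), H p.2.2 < H x0 + κ :=
    cz.eventually ((h.H_cd hne).continuousAt.eventually_lt continuousAt_const (by linarith))
  have ev4 := cp.eventually (h.E_quad hne hκ)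
  have ev5 := cp.eventually (hF.isLittleO.def hκ)
  filter_upwards [ev1, ev2, ev3, ev4, ev5, cp.eventually hs] with p i1 i2 i3 i4 i5 i6 hx hz
  obtain ⟨t, x, z⟩ := p
  simp only at *
  have hHz := h.pos z hz
  replace i6 := i6 hx hz
  set w := z - x with hw
  set s := ⟪hA n H x0 w, w⟫ with hsdef
  set a := ⟪hA n H x0 (v x0), w⟫ with ha
  have hsn : 0 ≤ s := h.A_nonneg hx0 w
  set σ := √s with hσ
  have hσs : σ ^ 2 = s := Real.sq_sqrt hsn
  have hσn : 0 ≤ σ := Real.sqrt_nonneg s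
  -- bound on a
  have ba : |a| ≤ √(q0 / H x0) * σ := by
    rw [hσ, ← Real.sqrt_mul (by positivity)]
    refine Real.abs_le_sqrt ?_
    rw [hq0, mul_div_cancel_left₀ _ h0.ne']
    exact h.A_cs hx0 _ _
  have bw : ‖w‖ ≤ σ / √c := by
    rw [hσ, ← Real.sqrt_div hsn]
    refine Real.le_sqrt_of_sq_le ?_
    rw [le_div_iff₀ hc]; linarith
  have bF : |F z - F x| ≤ (√(q0 / H x0) + κ / √c) * σ := by
    have e1 : ‖F x - F z - innerSL ℝ (hA n H x0 (v x0)) (x - z)‖ = |F z - F x - a| := by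
      rw [Real.norm_eq_abs, ← abs_neg]
      congr 1
      rw [ha, hw, innerSL_apply_apply, ← neg_sub z x, inner_neg_right]; ring
    rw [e1, ← neg_sub z x, norm_neg, ← hw] at i5
    have e2 : |F z - F x| ≤ |F z - F x - a| + |a| := by
      have := abs_add_le (F z - F x - a) a
      rwa [sub_add_cancel] at this
    have e3 : κ * ‖w‖ ≤ κ * (σ / √c) := mul_le_mul_of_nonneg_left bw hκ.le
    have : κ * (σ / √c) = κ / √c * σ := by ring
    linarith
  set B := √(q0 / H x0) + κ / √c with hB
  have hBn : 0 ≤ B := by positivity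
  have bE : (1 - 2 * κ / c) * s / 2 ≤ H z - ⟪gradient H x, z⟫ := by
    have : κ * ‖w‖ ^ 2 ≤ κ * (s / c) := by
      refine mul_le_mul_of_nonneg_left ?_ hκ.le
      rw [le_div_iff₀ hc]; linarith
    have e : (1 - 2 * κ / c) * s / 2 = s / 2 - κ * (s / c) := by ring
    linarith
  have bRE : (1 - κ) * (1 - 2 * κ / c) * σ ^ 2 / 2 ≤
      hR n H F v η t x * (H z - ⟪gradient H x, z⟫) := by
    rw [hσs]
    have e := mul_le_mul i1.le bE (by positivity) (by linarith)
    linarith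
  have hdisc := alg_disc (σ := σ) (y := |t|) (hz := H z) (B := B) (C := q0 + η / 2) hα hHz (by
    refine le_trans ?_ hκB
    exact mul_le_mul_of_nonneg_right i3.le (sq_nonneg B))
  have htF : -(|t| * (B * σ)) ≤ t * (F z - F x) := by
    have := mul_le_mul_of_nonneg_left bF (abs_nonneg t)
    rw [← abs_mul] at this
    linarith [neg_abs_le (t * (F z - F x))]
  have hq : |t| ^ 2 * (q0 + η / 2) / 2 ≤ t ^ 2 / 2 * (H x * ⟪hA n H x (v x), v x⟫ + η) := by
    rw [sq_abs]
    have := mul_le_mul_of_nonneg_left (show q0 + η / 2 ≤ H x * ⟪hA n H x (v x), v x⟫ + η by linarith)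
      (by positivity : 0 ≤ t ^ 2 / 2)
    linarith
  have hsum := mul_le_mul_of_nonneg_left (add_le_add htF hq) hHz.le
  have hRdef : H z * (t * (F z - F x) + t ^ 2 / 2 * (H x * ⟪hA n H x (v x), v x⟫ + η)) =
      H z * (1 + t * F z) - H z * hR n H F v η t x := by
    rw [hR]; ring
  rw [hRdef] at hsum
  nlinarith

lemma CBody.claim (h : CBody n H) {F : Euc n → ℝ} {v : Euc n → Euc n}
    (hF : ∀ x ∈ sphere (0 : Euc n) 1, HasStrictFDerivAt F (innerSL ℝ (hA n H x (v x))) x)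
    (hv : ∀ x ∈ sphere (0 : Euc n) 1, ContinuousAt v x) {η : ℝ} (hη : 0 < η) :
    ∀ᶠ t : ℝ in 𝓝 0, ∀ x ∈ sphere (0 : Euc n) 1, ∀ z ∈ sphere (0 : Euc n) 1,
      hR n H F v η t x * ⟪gradient H x, z⟫ ≤ H z * (1 + t * F z) := by
  have key : ∀ᶠ t : ℝ in 𝓝 0, ∀ p ∈ sphere (0 : Euc n) 1 ×ˢ sphere (0 : Euc n) 1,
      (p.1 ∈ sphere (0 : Euc n) 1 → p.2 ∈ sphere (0 : Euc n) 1 →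
      hR n H F v η t p.1 * ⟪gradient H p.1, p.2⟫ ≤ H p.2 * (1 + t * F p.2)) := by
    refine ((isCompact_sphere _ _).prod (isCompact_sphere _ _)).eventually_forall_of_forall_eventually ?_
    rintro ⟨x0, z0⟩ ⟨hx0, hz0⟩
    simp only at hx0 hz0
    rcases eq_or_ne z0 x0 with rfl | hne
    · exact h.claim_near hx0 (hF _ hx0) (hv _ hx0) hη
    · have nx := unit_ne hx0
      have nz := unit_ne hz0
      have cx : ContinuousAt (fun p : ℝ × (Euc n × Euc n) => p.2.1) (0, (x0, z0)) := by fun_prop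
      have cz : ContinuousAt (fun p : ℝ × (Euc n × Euc n) => p.2.2) (0, (x0, z0)) := by fun_prop
      have ct : ContinuousAt (fun p : ℝ × (Euc n × Euc n) => p.1) (0, (x0, z0)) := by fun_prop
      have hqc : ContinuousAt (fun x => H x * ⟪hA n H x (v x), v x⟫) x0 :=
        (h.H_cd nx).continuousAt.mul
          ((((h.A_cd nx).continuousAt).clm_apply (hv _ hx0)).inner (hv _ hx0))
      have a : ContinuousAt (fun p : ℝ × (Euc n × Euc n) => F p.2.1) (0, (x0, z0)) :=
        ContinuousAt.comp (f := fun p : ℝ × (Euc n × Euc n) => p.2.1) (g := F) (hF _ hx0).continuousAt cx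
      have a' : ContinuousAt (fun p : ℝ × (Euc n × Euc n) => F p.2.2) (0, (x0, z0)) :=
        ContinuousAt.comp (f := fun p : ℝ × (Euc n × Euc n) => p.2.2) (g := F) (hF _ hz0).continuousAt cz
      have b : ContinuousAt (fun p : ℝ × (Euc n × Euc n) => H p.2.1 * ⟪hA n H p.2.1 (v p.2.1), v p.2.1⟫) (0, (x0, z0)) :=
        ContinuousAt.comp (f := fun p : ℝ × (Euc n × Euc n) => p.2.1)
          (g := fun x => H x * ⟪hA n H x (v x), v x⟫) hqc cx
      have cR : ContinuousAt (fun p : ℝ × (Euc n × Euc n) => hR n H F v η p.1 p.2.1) (0, (x0, z0)) := by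
        unfold hR
        exact (continuousAt_const.add (ct.mul a)).sub
          (((ct.pow 2).div_const 2).mul (b.add continuousAt_const))
      have cH : ContinuousAt (fun p : ℝ × (Euc n × Euc n) => H p.2.2) (0, (x0, z0)) :=
        ContinuousAt.comp (f := fun p : ℝ × (Euc n × Euc n) => p.2.2) (g := H) (h.H_cd nz).continuousAt cz
      have cG : ContinuousAt (fun p : ℝ × (Euc n × Euc n) => gradient H p.2.1) (0, (x0, z0)) :=
        ContinuousAt.comp (f := fun p : ℝ × (Euc n × Euc n) => p.2.1) (g := gradient H)
          (h.G_cd nx).continuousAt cx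
      have := (cR.mul (cG.inner cz)).eventually_lt (cH.mul ((continuousAt_const (y := (1:ℝ))).add (ct.mul a')))
        (by simpa [hR] using h.E_pos hx0 hz0 hne)
      filter_upwards [this] with p hp _ _ using hp.le
  filter_upwards [key] with t ht x hx z hz
  exact ht (x, z) ⟨hx, hz⟩ hx hz
end Loc

section Poin
open scoped ENNReal Topology ContDiff

lemma pow_lower (N : ℕ) : ∃ C : ℝ, 0 ≤ C ∧ ∀ a : ℝ, |a| ≤ 1 →
    |(1 + a) ^ N - (1 + N * a + N * (N - 1) / 2 * a ^ 2)| ≤ C * |a| ^ 3 := by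
  induction N with
  | zero => exact ⟨0, le_rfl, fun a _ => by simp⟩
  | succ N ih =>
    obtain ⟨C, hC, h⟩ := ih
    refine ⟨2 * C + |(N * (N - 1) / 2 : ℝ)|, by positivity, fun a ha => ?_⟩
    have e : (1 + a) ^ (N + 1) - (1 + ((N + 1 : ℕ) : ℝ) * a + ((N + 1 : ℕ) : ℝ) * (((N + 1 : ℕ) : ℝ) - 1) / 2 * a ^ 2)
        = (1 + a) * ((1 + a) ^ N - (1 + N * a + N * (N - 1) / 2 * a ^ 2)) + N * (N - 1) / 2 * a ^ 3 := by
      push_cast; ring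
    rw [e]
    refine (abs_add_le _ _).trans ?_
    rw [abs_mul, abs_mul (_ / _), abs_pow]
    have h1 : |1 + a| ≤ 2 := by
      have := abs_add_le 1 a
      rw [abs_one] at this; linarith
    have h2 := mul_le_mul h1 (h a ha) (abs_nonneg _) (by norm_num)
    linarith

lemma second_var {Ω : Type*} [TopologicalSpace Ω] [CompactSpace Ω] [MeasurableSpace Ω]
    [OpensMeasurableSpace Ω] (μ : Measure Ω) [IsFiniteMeasure μ] (D F b : Ω → ℝ)
    (hD : Continuous D) (hF : Continuous F) (hb : Continuous b) (hD0 : ∀ x, 0 ≤ D x) (N : ℕ)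
    (hFD : ∫ x, F x * D x ∂μ = 0)
    (hle : ∀ᶠ t : ℝ in 𝓝 0, (∫ x, (1 + t * F x - t ^ 2 * b x) ^ N * D x ∂μ) *
      (∫ x, (1 + (-t) * F x - (-t) ^ 2 * b x) ^ N * D x ∂μ) ≤ (∫ x, D x ∂μ) ^ 2) :
    (N * (N - 1) / 2 : ℝ) * ∫ x, F x ^ 2 * D x ∂μ ≤ N * ∫ x, b x * D x ∂μ := by
  have hint : ∀ {f : Ω → ℝ}, Continuous f → Integrable f μ := fun hf =>
    hf.integrable_of_hasCompactSupport (HasCompactSupport.of_compactSpace _)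
  obtain ⟨M1, hM1⟩ := isCompact_univ.exists_bound_of_continuousOn hF.continuousOn
  obtain ⟨M2, hM2⟩ := isCompact_univ.exists_bound_of_continuousOn hb.continuousOn
  set M := max 1 (max M1 M2) with hM
  have M1' : ∀ x, |F x| ≤ M := fun x => (hM1 x trivial).trans ((le_max_left _ _).trans (le_max_right _ _))
  have M2' : ∀ x, |b x| ≤ M := fun x => (hM2 x trivial).trans ((le_max_right _ _).trans (le_max_right _ _))
  have hMp : 1 ≤ M := le_max_left _ _
  obtain ⟨C, hC, hpow⟩ := pow_lower N
  have hNN : (0:ℝ) ≤ N * (N - 1) / 2 := by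
    rcases Nat.eq_zero_or_pos N with rfl | h
    · simp
    · have : (1:ℝ) ≤ N := by exact_mod_cast h
      have : (0:ℝ) ≤ N - 1 := by linarith
      positivity
  set C3 := C * (2 * M) ^ 3 + (N * (N - 1) / 2 : ℝ) * (2 * M ^ 2) with hC3
  have hC3n : 0 ≤ C3 := by positivity
  have pw : ∀ t : ℝ, |t| * (2 * M) ≤ 1 → ∀ x, 1 + N * (t * F x - t ^ 2 * b x) +
      N * (N - 1) / 2 * (t ^ 2 * F x ^ 2) - C3 * |t| ^ 3 ≤ (1 + t * F x - t ^ 2 * b x) ^ N := by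
    intro t ht x
    set a := t * F x - t ^ 2 * b x with ha
    have ht1 : |t| ≤ 1 := by
      have := abs_nonneg t
      nlinarith
    have ha1 : |a| ≤ |t| * (2 * M) := by
      rw [ha]
      refine (abs_sub _ _).trans ?_
      rw [abs_mul, abs_mul, abs_pow]
      have e1 := mul_le_mul_of_nonneg_left (M1' x) (abs_nonneg t)
      have e2 : |t| ^ 2 * |b x| ≤ |t| * M := by
        rw [sq]
        have := mul_le_mul (mul_le_of_le_one_right (abs_nonneg t) ht1) (M2' x) (abs_nonneg _) (abs_nonneg t)
        exact this
      linarith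
    have h1 := hpow a (ha1.trans ht)
    have h2 : |a| ^ 3 ≤ (|t| * (2 * M)) ^ 3 := pow_le_pow_left₀ (abs_nonneg _) ha1 3
    have h3 := mul_le_mul_of_nonneg_left h2 hC
    have h4 : t ^ 2 * F x ^ 2 - 2 * M ^ 2 * |t| ^ 3 ≤ a ^ 2 := by
      have e : a ^ 2 = t ^ 2 * F x ^ 2 - 2 * (t ^ 3 * (F x * b x)) + (t ^ 2 * b x) ^ 2 := by rw [ha]; ring
      have e2 : t ^ 3 * (F x * b x) ≤ |t| ^ 3 * (M * M) := by
        refine (le_abs_self _).trans ?_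
        rw [abs_mul, abs_mul, abs_pow]
        exact mul_le_mul_of_nonneg_left (mul_le_mul (M1' x) (M2' x) (abs_nonneg _) (by linarith)) (by positivity)
      nlinarith [sq_nonneg (t ^ 2 * b x)]
    have h5 := mul_le_mul_of_nonneg_left h4 hNN
    have h6 := (abs_le.1 h1).1
    have e7 : (1 + t * F x - t ^ 2 * b x) = 1 + a := by rw [ha]; ring
    rw [e7]
    have e8 : (|t| * (2 * M)) ^ 3 = |t| ^ 3 * (2 * M) ^ 3 := by ring
    rw [e8] at h3
    rw [hC3]
    linarith
  set V := ∫ x, D x ∂μ with hV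
  set Q := ∫ x, F x ^ 2 * D x ∂μ with hQ
  set P := ∫ x, b x * D x ∂μ with hP
  have hVn : 0 ≤ V := integral_nonneg hD0
  have low : ∀ t : ℝ, |t| * (2 * M) ≤ 1 → V + t ^ 2 * ((N * (N - 1) / 2 : ℝ) * Q - N * P) - C3 * |t| ^ 3 * V
      ≤ ∫ x, (1 + t * F x - t ^ 2 * b x) ^ N * D x ∂μ := by
    intro t ht
    have i0 : Integrable D μ := hint hD
    have i1 : Integrable (fun x => F x * D x) μ := hint (hF.mul hD)
    have i2 : Integrable (fun x => b x * D x) μ := hint (hb.mul hD)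
    have i3 : Integrable (fun x => F x ^ 2 * D x) μ := hint ((hF.pow 2).mul hD)
    have e : ∫ x, ((1 - C3 * |t| ^ 3) * D x + (N * t) * (F x * D x) - (N * t ^ 2) * (b x * D x)
        + (N * (N - 1) / 2 * t ^ 2 : ℝ) * (F x ^ 2 * D x)) ∂μ =
        V + t ^ 2 * ((N * (N - 1) / 2 : ℝ) * Q - N * P) - C3 * |t| ^ 3 * V := by
      rw [integral_add, integral_sub, integral_add (i0.const_mul _) (i1.const_mul _)]
      · simp only [integral_const_mul]
        rw [hFD]; ring
      · exact (i0.const_mul _).add (i1.const_mul _)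
      · exact i2.const_mul _
      · exact ((i0.const_mul _).add (i1.const_mul _)).sub (i2.const_mul _)
      · exact i3.const_mul _
    rw [← e]
    refine integral_mono ((((i0.const_mul _).add (i1.const_mul _)).sub (i2.const_mul _)).add (i3.const_mul _))
      (hint (by fun_prop)) fun x => ?_
    have := mul_le_mul_of_nonneg_right (pw t ht x) (hD0 x)
    refine le_trans (le_of_eq ?_) this
    ring
  by_contra hcon
  push Not at hcon
  set J := (N * (N - 1) / 2 : ℝ) * Q - N * P with hJ
  have hJ0 : 0 < J := by rw [hJ]; linarith
  have ev1 : ∀ᶠ t : ℝ in 𝓝[>] 0, |t| * (2 * M) < 1 := by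
    refine nhdsWithin_le_nhds ?_
    have : ContinuousAt (fun t : ℝ => |t| * (2 * M)) 0 := by fun_prop
    exact this.eventually_lt continuousAt_const (by simp)
  have ev2 : ∀ᶠ t : ℝ in 𝓝[>] 0, C3 * |t| * V < J := by
    refine nhdsWithin_le_nhds ?_
    have : ContinuousAt (fun t : ℝ => C3 * |t| * V) 0 := by fun_prop
    exact this.eventually_lt continuousAt_const (by simpa using hJ0)
  have ev3 := nhdsWithin_le_nhds (s := Set.Ioi 0) hle
  obtain ⟨t, ⟨⟨t1, t2⟩, t3⟩, t0⟩ := (((ev1.and ev2).and ev3).and self_mem_nhdsWithin).exists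
  have t0 : 0 < t := t0
  have l1 := low t t1.le
  have l2 := low (-t) (by rw [abs_neg]; exact t1.le)
  rw [abs_neg, neg_sq] at l2
  rw [neg_sq] at t3
  rw [abs_of_pos t0] at t1 t2 l1 l2
  have gt : V < V + t ^ 2 * J - C3 * t ^ 3 * V := by
    have : 0 < t ^ 2 * (J - C3 * t * V) := mul_pos (by positivity) (by linarith)
    nlinarith
  have := mul_lt_mul'' (gt.trans_le l1) (gt.trans_le l2) hVn hVn
  nlinarith

variable {n : ℕ} {H : Euc n → ℝ}

instance sph_fin (n : ℕ) : IsFiniteMeasure (sphMeasure n) := by unfold sphMeasure; infer_instance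

lemma sph_int {n : ℕ} {E : Type*} [NormedAddCommGroup E] {f : sphere (0 : Euc n) 1 → E} (hf : Continuous f) :
    Integrable f (sphMeasure n) :=
  hf.integrable_of_hasCompactSupport (HasCompactSupport.of_compactSpace _)

lemma sph_cont {n : ℕ} {E : Type*} [TopologicalSpace E] {f : Euc n → E}
    (hf : ∀ x ∈ sphere (0 : Euc n) 1, ContinuousAt f x) :
    Continuous (fun x : sphere (0 : Euc n) 1 => f x) :=
  continuous_iff_continuousAt.2 fun x => (hf x x.2).comp continuous_subtype_val.continuousAt

lemma CBody.D_cont (h : CBody n H) : Continuous fun x : sphere (0 : Euc n) 1 => hD n H x :=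
  sph_cont fun _ hx => (h.hD_cd (unit_ne hx)).continuousAt

lemma CBody.V_pos (h : CBody n H) : 0 < ∫ x : sphere (0 : Euc n) 1, hD n H x ∂sphMeasure n := by
  rw [integral_pos_iff_support_of_nonneg (fun x => (h.hD_pos x.2).le) (sph_int h.D_cont)]
  have : Function.support (fun x : sphere (0 : Euc n) 1 => hD n H x) = Set.univ := by
    ext x; simp [(h.hD_pos x.2).ne']
  rw [this, sphMeasure, Measure.toSphere_apply_univ]
  have : 0 < volume (ball (0 : Euc n) 1) := measure_ball_pos _ _ one_pos
  simp [pos_iff_ne_zero] at *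
  try exact this

lemma CBody.poincare0 (h : CBody n H) {F : Euc n → ℝ} {v : Euc n → Euc n}
    (hF : ∀ x ∈ sphere (0 : Euc n) 1, HasStrictFDerivAt F (innerSL ℝ (hA n H x (v x))) x)
    (hv : ∀ x ∈ sphere (0 : Euc n) 1, ContinuousAt v x)
    (h0 : ∫ x : sphere (0 : Euc n) 1, F x * hD n H x ∂sphMeasure n = 0) :
    n * ∫ x : sphere (0 : Euc n) 1, F x ^ 2 * hD n H x ∂sphMeasure n ≤
      ∫ x : sphere (0 : Euc n) 1, H x * ⟪hA n H x (v x), v x⟫ * hD n H x ∂sphMeasure n := by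
  have cF : Continuous fun x : sphere (0 : Euc n) 1 => F x := sph_cont fun x hx => (hF x hx).continuousAt
  have cq' : ∀ x ∈ sphere (0 : Euc n) 1, ContinuousAt (fun x => H x * ⟪hA n H x (v x), v x⟫) x :=
    fun x hx => (h.H_cd (unit_ne hx)).continuousAt.mul
          ((((h.A_cd (unit_ne hx)).continuousAt).clm_apply (hv _ hx)).inner (hv _ hx))
  have cq : Continuous fun x : sphere (0 : Euc n) 1 => H x * ⟪hA n H x (v x), v x⟫ :=
    sph_cont (f := fun x => H x * ⟪hA n H x (v x), v x⟫) cq'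
  have cD := h.D_cont
  have key : ∀ η > 0, n * ∫ x : sphere (0 : Euc n) 1, F x ^ 2 * hD n H x ∂sphMeasure n ≤
      (∫ x : sphere (0 : Euc n) 1, H x * ⟪hA n H x (v x), v x⟫ * hD n H x ∂sphMeasure n)
      + η * ∫ x : sphere (0 : Euc n) 1, hD n H x ∂sphMeasure n := by
    intro η hη
    have sv := second_var (sphMeasure n) (fun x => hD n H x) (fun x => F x)
      (fun x => (H x * ⟪hA n H x (v x), v x⟫ + η) / 2) cD cF (by fun_prop)
      (fun x => (h.hD_pos x.2).le) (n+1) h0 ?_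
    · have e : ∫ x : sphere (0 : Euc n) 1, (H x * ⟪hA n H x (v x), v x⟫ + η) / 2 * hD n H x ∂sphMeasure n
          = ((∫ x : sphere (0 : Euc n) 1, H x * ⟪hA n H x (v x), v x⟫ * hD n H x ∂sphMeasure n)
      + η * ∫ x : sphere (0 : Euc n) 1, hD n H x ∂sphMeasure n) / 2 := by
        have iq : Integrable (fun x : sphere (0 : Euc n) 1 => H x * ⟪hA n H x (v x), v x⟫ * hD n H x)
          (sphMeasure n) := sph_int (cq.mul cD)
        rw [← integral_const_mul, ← integral_add iq ((sph_int cD).const_mul _), ← integral_div]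
        congr 1; ext x; ring
      rw [e] at sv
      push_cast at sv
      have hnp : (0:ℝ) < n + 1 := by positivity
      have : ((n:ℝ) + 1) * (n * ∫ x : sphere (0 : Euc n) 1, F x ^ 2 * hD n H x ∂sphMeasure n) ≤
        (n + 1) * ((∫ x : sphere (0 : Euc n) 1, H x * ⟪hA n H x (v x), v x⟫ * hD n H x ∂sphMeasure n)
      + η * ∫ x : sphere (0 : Euc n) 1, hD n H x ∂sphMeasure n) := by
        have e3 : ((n:ℝ) + 1 - 1) = n := by ring
        rw [e3] at sv
        linarith
      exact le_of_mul_le_mul_left this hnp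
    · have c1 := h.claim hF hv hη
      have hneg : Filter.Tendsto (fun t : ℝ => -t) (𝓝 0) (𝓝 0) := by
        simpa using (continuous_neg (G := ℝ)).tendsto 0
      have c2 := hneg.eventually c1
      have cR : ∀ x ∈ sphere (0 : Euc n) 1, ContinuousAt (fun p : ℝ × Euc n => hR n H F v η p.1 p.2) (0, x) := by
        intro x hx
        have ct : ContinuousAt (fun p : ℝ × Euc n => p.1) (0, x) := by fun_prop
        have cx : ContinuousAt (fun p : ℝ × Euc n => p.2) (0, x) := by fun_prop
        have a : ContinuousAt (fun p : ℝ × Euc n => F p.2) (0, x) :=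
          ContinuousAt.comp (f := fun p : ℝ × Euc n => p.2) (g := F) (hF x hx).continuousAt cx
        have b : ContinuousAt (fun p : ℝ × Euc n => H p.2 * ⟪hA n H p.2 (v p.2), v p.2⟫) (0, x) :=
          ContinuousAt.comp (f := fun p : ℝ × Euc n => p.2)
            (g := fun x => H x * ⟪hA n H x (v x), v x⟫) (cq' x hx) cx
        unfold hR
        exact (continuousAt_const.add (ct.mul a)).sub
          (((ct.pow 2).div_const 2).mul (b.add continuousAt_const))
      have c3 : ∀ᶠ t : ℝ in 𝓝 0, ∀ x ∈ sphere (0 : Euc n) 1, 0 < hR n H F v η t x := by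
        refine (isCompact_sphere (0 : Euc n) 1).eventually_forall_of_forall_eventually fun x hx => ?_
        exact continuousAt_const.eventually_lt (cR x hx) (by simp [hR])
      have c4 : ∀ᶠ t : ℝ in 𝓝 0, ∀ x ∈ sphere (0 : Euc n) 1, 0 < 1 + t * F x ∧ 1 + t * F x < 2 := by
        refine (isCompact_sphere (0 : Euc n) 1).eventually_forall_of_forall_eventually fun x hx => ?_
        have ct : ContinuousAt (fun p : ℝ × Euc n => p.1) (0, x) := by fun_prop
        have cx : ContinuousAt (fun p : ℝ × Euc n => p.2) (0, x) := by fun_prop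
        have a : ContinuousAt (fun p : ℝ × Euc n => F p.2) (0, x) :=
          ContinuousAt.comp (f := fun p : ℝ × Euc n => p.2) (g := F) (hF x hx).continuousAt cx
        have b : ContinuousAt (fun p : ℝ × Euc n => 1 + p.1 * F p.2) (0, x) :=
          continuousAt_const.add (ct.mul a)
        exact (continuousAt_const.eventually_lt b (by simp)).and (b.eventually_lt continuousAt_const (by simp))
      filter_upwards [c1, c2, c3, hneg.eventually c3, c4] with t d1 d2 d3 d4 d5
      have cRt : ∀ t, ContinuousOn (hR n H F v η t) (sphere 0 1) := by
        intro t x hx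
        refine ContinuousAt.continuousWithinAt ?_
        unfold hR
        exact (continuousAt_const.add (continuousAt_const.mul (hF x hx).continuousAt)).sub
          (continuousAt_const.mul ((cq' x hx).add continuousAt_const))
      have := h.bm_app (R := hR n H F v η t) (R' := hR n H F v η (-t)) (g := fun x => 1 + t * F x)
        (cRt t) (cRt (-t)) d3 d4 d5 d1 (fun x hx z hz => (d2 x hx z hz).trans (le_of_eq (by ring)))
      convert this using 3
      · ext x; unfold hR; ring
      · ext x; unfold hR; ring
  set V := ∫ x : sphere (0 : Euc n) 1, hD n H x ∂sphMeasure n with hV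
  have hVp : 0 < V := h.V_pos
  refine le_of_forall_pos_le_add fun ε hε => ?_
  have := key (ε / V) (by positivity)
  rwa [div_mul_cancel₀ _ hVp.ne'] at this

lemma CBody.poincare (h : CBody n H) {F : Euc n → ℝ} {v : Euc n → Euc n}
    (hF : ∀ x ∈ sphere (0 : Euc n) 1, HasStrictFDerivAt F (innerSL ℝ (hA n H x (v x))) x)
    (hv : ∀ x ∈ sphere (0 : Euc n) 1, ContinuousAt v x) :
    n * (∫ x : sphere (0 : Euc n) 1, F x ^ 2 * hD n H x ∂sphMeasure n) -
      ∫ x : sphere (0 : Euc n) 1, H x * ⟪hA n H x (v x), v x⟫ * hD n H x ∂sphMeasure n ≤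
      n * (∫ x : sphere (0 : Euc n) 1, F x * hD n H x ∂sphMeasure n) ^ 2 /
      (∫ x : sphere (0 : Euc n) 1, hD n H x ∂sphMeasure n) := by
  set V := ∫ x : sphere (0 : Euc n) 1, hD n H x ∂sphMeasure n with hV
  have hVp : 0 < V := h.V_pos
  set m := ∫ x : sphere (0 : Euc n) 1, F x * hD n H x ∂sphMeasure n with hm
  have cF : Continuous fun x : sphere (0 : Euc n) 1 => F x := sph_cont fun x hx => (hF x hx).continuousAt
  have cD := h.D_cont
  have i0 := sph_int cD
  have i1 : Integrable (fun x : sphere (0 : Euc n) 1 => F x * hD n H x) (sphMeasure n) :=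
    sph_int (cF.mul cD)
  have i2 : Integrable (fun x : sphere (0 : Euc n) 1 => F x ^ 2 * hD n H x) (sphMeasure n) :=
    sph_int ((cF.pow 2).mul cD)
  have key := h.poincare0 (F := fun x => F x - m / V) (v := v)
    (fun x hx => (hF x hx).sub_const _) hv (by
      have e : ∀ x : sphere (0 : Euc n) 1, (F x - m / V) * hD n H x = F x * hD n H x - m / V * hD n H x := by
        intro x; ring
      simp only [e]
      rw [integral_sub i1 (i0.const_mul _), integral_const_mul, ← hm, ← hV]
      field_simp; ring)
  have e : ∀ x : sphere (0 : Euc n) 1, (F x - m / V) ^ 2 * hD n H x =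
      F x ^ 2 * hD n H x - 2 * (m / V) * (F x * hD n H x) + (m / V) ^ 2 * hD n H x := by
    intro x; ring
  simp only [e] at key
  have e5 : ∫ x : sphere (0 : Euc n) 1, (F x ^ 2 * hD n H x - 2 * (m / V) * (F x * hD n H x) + (m / V) ^ 2 * hD n H x) ∂sphMeasure n
      = (∫ x : sphere (0 : Euc n) 1, F x ^ 2 * hD n H x ∂sphMeasure n) - 2 * (m / V) * m + (m / V) ^ 2 * V := by
    rw [integral_add, integral_sub i2 (i1.const_mul _), integral_const_mul, integral_const_mul]
    · exact i2.sub (i1.const_mul _)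
    · exact i0.const_mul _
  rw [e5] at key
  have e2 : 2 * (m / V) * m - (m / V) ^ 2 * V = m ^ 2 / V := by field_simp; ring
  have e3 : (n:ℝ) * m ^ 2 / V = n * (m ^ 2 / V) := by ring
  rw [e3, ← e2]
  linarith
end Poin

section Ibp
open scoped ENNReal Topology ContDiff

lemma cut_cont {n : ℕ} {c : ℝ → ℝ} (hc : Continuous c) (h1 : ∀ r, r < 1 → c r = 0)
    {p : Euc n → ℝ} (hp : ∀ y, y ≠ 0 → ContinuousAt p y) : Continuous fun y => c ‖y‖ * p y := by
  rw [continuous_iff_continuousAt]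
  intro y
  by_cases hy : y = 0
  · subst hy
    have : (fun y : Euc n => c ‖y‖ * p y) =ᶠ[𝓝 0] fun _ => (0:ℝ) := by
      filter_upwards [ball_mem_nhds (0 : Euc n) one_pos] with z hz
      rw [h1 _ (by simpa using hz), zero_mul]
    exact continuousAt_const.congr this.symm
  · exact (hc.continuousAt.comp continuous_norm.continuousAt).mul (hp y hy)

lemma cut_cs {n : ℕ} {c : ℝ → ℝ} (h3 : ∀ r, 3 < r → c r = 0)
    {p : Euc n → ℝ} : HasCompactSupport fun y => c ‖y‖ * p y := by
  refine HasCompactSupport.intro (isCompact_closedBall (0 : Euc n) 3) fun y hy => ?_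
  rw [h3 _ (by simpa using hy), zero_mul]

lemma cut_int {n : ℕ} {c : ℝ → ℝ} (hc : Continuous c) (h1 : ∀ r, r < 1 → c r = 0)
    (h3 : ∀ r, 3 < r → c r = 0)
    {p : Euc n → ℝ} (hp : ∀ y, y ≠ 0 → ContinuousAt p y) : Integrable fun y => c ‖y‖ * p y :=
  (cut_cont hc h1 hp).integrable_of_hasCompactSupport (cut_cs h3)

lemma sph_div {n : ℕ} {g : Euc n → ℝ} (hg : ∀ y, y ≠ 0 → ContDiffAt ℝ 1 g y)
    (hh : ∀ y, y ≠ 0 → ∀ c : ℝ, 0 < c → g (c • y) = (c ^ n)⁻¹ * g y) (v : Euc n) :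
    ∫ x : sphere (0 : Euc n) 1, fderiv ℝ g x v ∂sphMeasure n = 0 := by
  let b : ContDiffBump (2:ℝ) := ⟨1/2, 1, by norm_num, by norm_num⟩
  have hb0 : ∀ r, r ≤ 1 ∨ 3 ≤ r → b r = 0 := by
    intro r hr
    have : r ∉ Function.support b := by
      rw [b.support_eq]
      simp only [mem_ball, Real.dist_eq, not_lt, b]
      rcases hr with h | h
      · rw [abs_of_neg (by linarith)]; linarith
      · rw [abs_of_pos (by linarith)]; linarith
    simpa using this
  let c : ℝ → ℝ := fun r => r * b r
  have cd : ContDiff ℝ ∞ c := contDiff_id.mul b.contDiff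
  have c1 : ∀ r, r ≤ 1 → c r = 0 := fun r hr => by simp only [c]; rw [hb0 r (Or.inl hr), mul_zero]
  have c3 : ∀ r, 3 ≤ r → c r = 0 := fun r hr => by simp only [c]; rw [hb0 r (Or.inr hr), mul_zero]
  have d1 : ∀ r, r < 1 → deriv c r = 0 := fun r hr => by
    have : c =ᶠ[𝓝 r] fun _ => (0:ℝ) := by
      filter_upwards [Iio_mem_nhds hr] with s hs using c1 s (le_of_lt hs)
    rw [this.deriv_eq, deriv_const]
  have d3 : ∀ r, 3 < r → deriv c r = 0 := fun r hr => by
    have : c =ᶠ[𝓝 r] fun _ => (0:ℝ) := by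
      filter_upwards [Ioi_mem_nhds hr] with s hs using c3 s (le_of_lt hs)
    rw [this.deriv_eq, deriv_const]
  have dcont : Continuous (deriv c) := cd.continuous_deriv (by simp)
  have hcs : HasCompactSupport c := HasCompactSupport.intro (isCompact_closedBall (2:ℝ) 1) fun r hr => by
    simp only [mem_closedBall, Real.dist_eq, not_le, lt_abs] at hr
    rcases hr with h | h
    · exact c3 r (by linarith)
    · exact c1 r (by linarith)
  have gco : ∀ y, y ≠ 0 → ContinuousAt g y := fun y hy => (hg y hy).continuousAt
  have gfd : ∀ y, y ≠ 0 → HasFDerivAt g (fderiv ℝ g y) y := fun y hy =>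
    ((hg y hy).differentiableAt (by simp)).hasFDerivAt
  have gdc : ∀ y, y ≠ 0 → ContinuousAt (fun y => fderiv ℝ g y v) y := fun y hy =>
    (((hg y hy).fderiv_right (m := 0) (by simp)).continuousAt).clm_apply continuousAt_const
  have gdh : ∀ y, y ≠ 0 → ∀ s : ℝ, 0 < s → fderiv ℝ g (s • y) v = (s ^ (n+1))⁻¹ * fderiv ℝ g y v := by
    intro y hy s hs
    have hsy : s • y ≠ 0 := smul_ne_zero hs.ne' hy
    have e1 : HasFDerivAt (fun z => g (s • z)) ((fderiv ℝ g (s • y)).comp (s • ContinuousLinearMap.id ℝ (Euc n))) y :=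
      (gfd _ hsy).comp y ((hasFDerivAt_id y).const_smul s)
    have e2 : HasFDerivAt (fun z => g (s • z)) ((s ^ n)⁻¹ • fderiv ℝ g y) y := by
      refine ((gfd y hy).const_mul ((s ^ n)⁻¹)).congr_of_eventuallyEq ?_
      filter_upwards [isOpen_ne.mem_nhds hy] with z hz
      exact hh z hz s hs
    have := congrArg (fun T => T v) (e1.unique e2)
    simp only [ContinuousLinearMap.comp_apply, _root_.smul_apply, ContinuousLinearMap.id_apply,
      map_smul, smul_eq_mul] at this
    rw [pow_succ, mul_inv, mul_right_comm, ← this]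
    field_simp
  have nd : ∀ y : Euc n, y ≠ 0 → HasFDerivAt (fun z : Euc n => ‖z‖) (innerSL ℝ (‖y‖⁻¹ • y)) y := by
    intro y hy
    have h1 := (hasStrictFDerivAt_norm_sq y).hasFDerivAt
    have h2 := h1.sqrt (by positivity)
    have : (fun z : Euc n => √(‖z‖^2)) = fun z => ‖z‖ := by ext z; exact Real.sqrt_sq (norm_nonneg _)
    rw [this] at h2
    refine h2.congr_fderiv (ContinuousLinearMap.ext fun w => ?_)
    rw [Real.sqrt_sq (norm_nonneg _)]
    have := norm_ne_zero_iff.2 hy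
    simp [real_inner_smul_left]
    field_simp
  let w : Euc n → ℝ := fun y => c ‖y‖ * g y
  have wfd : ∀ y, HasFDerivAt w (c ‖y‖ • fderiv ℝ g y + g y • (deriv c ‖y‖ • innerSL ℝ (‖y‖⁻¹ • y))) y := by
    intro y
    by_cases hy : y = 0
    · subst hy
      have : w =ᶠ[𝓝 0] fun _ => (0:ℝ) := by
        filter_upwards [ball_mem_nhds (0 : Euc n) one_pos] with z hz
        have : ‖z‖ < 1 := by simpa using hz
        simp only [w]
        rw [c1 _ this.le, zero_mul]
      refine HasFDerivAt.congr_of_eventuallyEq ?_ this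
      convert hasFDerivAt_const (0:ℝ) (0 : Euc n) using 1
      rw [norm_zero, c1 0 (by norm_num), d1 0 (by norm_num)]
      simp
    · have hc' : HasDerivAt c (deriv c ‖y‖) ‖y‖ := (cd.differentiable (by simp) _).hasDerivAt
      exact (hc'.comp_hasFDerivAt y (nd y hy)).mul (gfd y hy)
  have i1 : Integrable fun y : Euc n => c ‖y‖ * fderiv ℝ g y v :=
    cut_int cd.continuous (fun r hr => c1 r hr.le) (fun r hr => c3 r hr.le) gdc
  have i2 : Integrable fun y : Euc n => deriv c ‖y‖ * (g y * ⟪‖y‖⁻¹ • y, v⟫) := by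
    refine cut_int dcont d1 d3 fun y hy => (gco y hy).mul ?_
    exact ((continuous_norm.continuousAt.inv₀ (norm_ne_zero_iff.2 hy)).smul continuousAt_id).inner continuousAt_const
  have wd : ∀ y, fderiv ℝ w y v = c ‖y‖ * fderiv ℝ g y v + deriv c ‖y‖ * (g y * ⟪‖y‖⁻¹ • y, v⟫) := by
    intro y
    rw [(wfd y).fderiv]
    simp only [_root_.add_apply, _root_.smul_apply, smul_eq_mul, innerSL_apply_apply]
    ring
  have iw : Integrable fun y => fderiv ℝ w y v := by
    simp_rw [wd]; exact i1.add i2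
  have iw0 : Integrable w := cut_int cd.continuous (fun r hr => c1 r hr.le) (fun r hr => c3 r hr.le) gco
  have hz : ∫ y, fderiv ℝ w y v = 0 := by
    have := integral_mul_fderiv_eq_neg_fderiv_mul_of_integrable (μ := (volume : Measure (Euc n)))
      (f := fun _ : Euc n => (1:ℝ)) (g := w) (v := v) (by simp) (by simpa using iw) (by simpa using iw0)
      (fun x _ => by fun_prop) (fun x _ => (wfd x).differentiableAt)
    simpa using this
  simp_rw [wd] at hz
  rw [integral_add i1 i2] at hz
  have p1 := polar_real n (fun r => c r * (r ^ (n+1))⁻¹) (fun x => fderiv ℝ g x v)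
  have p2 := polar_real n (fun r => deriv c r * (r ^ n)⁻¹) (fun x => g x * ⟪x, v⟫)
  have q1 : ∫ y : Euc n, c ‖y‖ * fderiv ℝ g y v = ∫ y : Euc n, (c ‖y‖ * (‖y‖ ^ (n+1))⁻¹) * fderiv ℝ g (‖y‖⁻¹ • y) v := by
    congr 1; ext y
    by_cases hy : y = 0
    · subst hy; rw [norm_zero, c1 0 (by norm_num)]; simp
    · have hp := norm_pos_iff.2 hy
      rw [gdh y hy _ (inv_pos.2 hp), inv_pow, inv_inv]
      field_simp
  have q2 : ∫ y : Euc n, deriv c ‖y‖ * (g y * ⟪‖y‖⁻¹ • y, v⟫) =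
      ∫ y : Euc n, (deriv c ‖y‖ * (‖y‖ ^ n)⁻¹) * (g (‖y‖⁻¹ • y) * ⟪‖y‖⁻¹ • y, v⟫) := by
    congr 1; ext y
    by_cases hy : y = 0
    · subst hy; rw [norm_zero, d1 0 (by norm_num)]; simp
    · have hp := norm_pos_iff.2 hy
      rw [hh y hy _ (inv_pos.2 hp), inv_pow, inv_inv]
      field_simp
  have r1 : ∫ r in Set.Ioi (0:ℝ), r ^ n * (c r * (r ^ (n+1))⁻¹) = ∫ r, b r := by
    have : ∫ r in Set.Ioi (0:ℝ), r ^ n * (c r * (r ^ (n+1))⁻¹) = ∫ r in Set.Ioi (0:ℝ), b r := by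
      refine setIntegral_congr_fun measurableSet_Ioi fun r hr => ?_
      have : r ≠ 0 := ne_of_gt hr
      simp only [c]
      field_simp
      ring
    rw [this, setIntegral_eq_integral_of_forall_compl_eq_zero]
    intro r hr
    exact hb0 r (Or.inl (by simp at hr; linarith))
  have r2 : ∫ r in Set.Ioi (0:ℝ), r ^ n * (deriv c r * (r ^ n)⁻¹) = 0 := by
    have : ∫ r in Set.Ioi (0:ℝ), r ^ n * (deriv c r * (r ^ n)⁻¹) = ∫ r in Set.Ioi (0:ℝ), deriv c r := by
      refine setIntegral_congr_fun measurableSet_Ioi fun r hr => ?_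
      have : r ≠ 0 := ne_of_gt hr
      field_simp
    rw [this, HasCompactSupport.integral_Ioi_deriv_eq (cd.of_le (by simp)) hcs, c1 0 (by norm_num), neg_zero]
  rw [q1, q2, p1, p2, r1, r2, mul_zero, add_zero] at hz
  exact (mul_eq_zero.1 hz).resolve_right (b.integral_pos).ne'

end Ibp

section Ident
open scoped ENNReal Topology ContDiff
variable {n : ℕ} {H : Euc n → ℝ}

lemma pi_cd {y : Euc n} (hy : y ≠ 0) : ContDiffAt ℝ ∞ (fun z : Euc n => ‖z‖⁻¹ • z) y :=
  ((contDiffAt_norm ℝ hy).inv (norm_ne_zero_iff.2 hy)).smul contDiffAt_id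

lemma pi_homog (y : Euc n) {c : ℝ} (hc : 0 < c) : ‖c • y‖⁻¹ • (c • y) = ‖y‖⁻¹ • y := by
  rw [norm_smul, Real.norm_of_nonneg hc.le, smul_smul, mul_inv]
  congr 1
  field_simp

lemma pi_sph {x : Euc n} (hx : x ∈ sphere (0 : Euc n) 1) : ‖x‖⁻¹ • x = x := by
  have : ‖x‖ = 1 := by simpa using hx
  rw [this]; simp

def hWq (n : ℕ) (H : Euc n → ℝ) (y : Euc n) : ℝ :=
  (H (‖y‖⁻¹ • y)) ^ (n + 1) * hD n H (‖y‖⁻¹ • y)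

lemma CBody.W_cd (h : CBody n H) {y : Euc n} (hy : y ≠ 0) : ContDiffAt ℝ ∞ (hWq n H) y := by
  have hp := unit_ne (unit_pi hy)
  have e1 : ContDiffAt ℝ ∞ (fun z : Euc n => H (‖z‖⁻¹ • z)) y := ContDiffAt.comp (f := fun z : Euc n => ‖z‖⁻¹ • z) y (h.H_cd hp) (pi_cd hy)
  have e2 : ContDiffAt ℝ ∞ (fun z : Euc n => hD n H (‖z‖⁻¹ • z)) y := ContDiffAt.comp (f := fun z : Euc n => ‖z‖⁻¹ • z) y (h.hD_cd hp) (pi_cd hy)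
  exact (e1.pow _).mul e2

lemma CBody.W_pos (h : CBody n H) {y : Euc n} (hy : y ≠ 0) : 0 < hWq n H y :=
  mul_pos (pow_pos (h.H_pos (unit_ne (unit_pi hy))) _) (h.hD_pos (unit_pi hy))

lemma CBody.logQ_eq (h : CBody n H) {y : Euc n} (hy : y ≠ 0) :
    logQ n H (‖y‖⁻¹ • y) = Real.log (hWq n H y) := by
  have hp := h.H_pos (unit_ne (unit_pi hy))
  unfold logQ hWq gaussCurv sigman hD
  congr 1
  rw [div_inv_eq_mul]
  generalize H (‖y‖⁻¹ • y) = t at hp ⊢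
  generalize (bmat n H (‖y‖⁻¹ • y)).det = d
  field_simp
  ring

lemma CBody.sphGrad_logQ (h : CBody n H) {x : Euc n} (hx : x ≠ 0) (v : Euc n) :
    ⟪sphGrad n (logQ n H) x, v⟫ = (hWq n H x)⁻¹ * fderiv ℝ (hWq n H) x v := by
  have e : (fun y => logQ n H (‖y‖⁻¹ • y)) =ᶠ[𝓝 x] fun y => Real.log (hWq n H y) := by
    filter_upwards [isOpen_ne.mem_nhds hx] with z hz using h.logQ_eq hz
  have d := (((h.W_cd hx).differentiableAt (by simp)).hasFDerivAt.log (h.W_pos hx).ne').congr_of_eventuallyEq e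
  unfold sphGrad
  rw [inner_gradient_left, d.fderiv]
  simp

def hI (n : ℕ) (H u : Euc n → ℝ) (x : Euc n) : ℝ :=
  hD n H x * (H x * fderiv ℝ u x (gradient H x)
      + u x * (H x * ⟪sphGrad n (logQ n H) x, gradient H x⟫)
      - n * (u x * ‖gradient H x‖ ^ 2)
      + u x * (H x * ∑ l, ⟪hA n H x (EuclideanSpace.single l 1), EuclideanSpace.single l 1⟫))

lemma CBody.ibp (h : CBody n H) {u : Euc n → ℝ} (hu : ∀ y, y ≠ 0 → ContDiffAt ℝ 1 u y)
    (hh : ∀ y, y ≠ 0 → ∀ c : ℝ, 0 < c → u (c • y) = u y) :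
    Integrable (fun x : sphere (0 : Euc n) 1 => hI n H u x) (sphMeasure n) ∧
      ∫ x : sphere (0 : Euc n) 1, hI n H u x ∂sphMeasure n = 0 := by
  let s : Euc n → ℝ := fun y => u y * hWq n H y * (H y ^ n)⁻¹
  have scd : ∀ y, y ≠ 0 → ContDiffAt ℝ 1 s y := fun y hy =>
    ((hu y hy).mul ((h.W_cd hy).of_le (by simp))).mul
      ((((h.H_cd hy).of_le (by simp)).pow n).inv (pow_ne_zero _ (h.H_pos hy).ne'))
  let g : Fin (n+1) → Euc n → ℝ := fun l y => s y * gradient H y l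
  have Gl : ∀ y, y ≠ 0 → ∀ l, ContDiffAt ℝ 1 (fun y => gradient H y l) y := fun y hy l =>
    ((EuclideanSpace.proj l : Euc n →L[ℝ] ℝ).contDiff.contDiffAt).comp y ((h.G_cd hy).of_le (by simp))
  have gcd : ∀ l y, y ≠ 0 → ContDiffAt ℝ 1 (g l) y := fun l y hy => (scd y hy).mul (Gl y hy l)
  have ghom : ∀ l y, y ≠ 0 → ∀ c : ℝ, 0 < c → g l (c • y) = (c ^ n)⁻¹ * g l y := by
    intro l y hy c hc
    have hw : hWq n H (c • y) = hWq n H y := by unfold hWq; rw [pi_homog y hc]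
    simp only [g, s]
    rw [hh y hy c hc, hw, h.homog c hc, h.G_homog hy hc, mul_pow, mul_inv]
    ring
  have z : ∀ l, ∫ x : sphere (0 : Euc n) 1, fderiv ℝ (g l) x (EuclideanSpace.single l 1) ∂sphMeasure n = 0 :=
    fun l => sph_div (gcd l) (ghom l) _
  have ii : ∀ l, Integrable (fun x : sphere (0 : Euc n) 1 => fderiv ℝ (g l) x (EuclideanSpace.single l 1)) (sphMeasure n) := by
    intro l
    refine sph_int (sph_cont (f := fun x => fderiv ℝ (g l) x (EuclideanSpace.single l 1)) fun x hx => ?_)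
    exact (((gcd l x (unit_ne hx)).fderiv_right (m := 0) (by simp)).continuousAt).clm_apply continuousAt_const
  have zs : ∫ x : sphere (0 : Euc n) 1, ∑ l, fderiv ℝ (g l) x (EuclideanSpace.single l 1) ∂sphMeasure n = 0 := by
    rw [integral_finsetSum _ fun l _ => ii l]
    exact Finset.sum_eq_zero fun l _ => z l
  suffices key : (fun x : sphere (0 : Euc n) 1 => hI n H u x) =
      fun x : sphere (0 : Euc n) 1 => ∑ l, fderiv ℝ (g l) x (EuclideanSpace.single l 1) by
    rw [key]
    exact ⟨integrable_finsetSum _ fun l _ => ii l, zs⟩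
  ext ⟨x, hx⟩
  simp only [hI]
  have hx0 := unit_ne hx
  have gd : ∀ l, fderiv ℝ (g l) x (EuclideanSpace.single l 1) =
      s x * ⟪hA n H x (EuclideanSpace.single l 1), EuclideanSpace.single l 1⟫
      + gradient H x l * fderiv ℝ s x (EuclideanSpace.single l 1) := by
    intro l
    have d1 := ((scd x hx0).differentiableAt (by simp)).hasFDerivAt
    have d2 : HasFDerivAt (fun y => gradient H y l) ((EuclideanSpace.proj l : Euc n →L[ℝ] ℝ).comp (hA n H x)) x :=
      (EuclideanSpace.proj l : Euc n →L[ℝ] ℝ).hasFDerivAt.comp x (h.G_fd hx0)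
    have d3 : fderiv ℝ (g l) x = _ := (d1.mul d2).fderiv
    rw [d3]
    simp [EuclideanSpace.inner_single_right]
  have sumG : ∑ l, gradient H x l * fderiv ℝ s x (EuclideanSpace.single l 1) = fderiv ℝ s x (gradient H x) := by
    have : gradient H x = ∑ l, gradient H x l • (EuclideanSpace.single l (1:ℝ) : Euc n) := by
      ext i; simp [Finset.sum_apply, Pi.single_apply]
    conv_rhs => rw [this, map_sum]
    simp
  simp_rw [gd]
  rw [Finset.sum_add_distrib, ← Finset.mul_sum, sumG, h.sphGrad_logQ hx0]
  have hH := h.H_pos hx0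
  have hHn : H x ^ n ≠ 0 := pow_ne_zero _ hH.ne'
  have hDp := h.hD_pos hx
  have hWx : hWq n H x = H x ^ (n+1) * hD n H x := by unfold hWq; rw [pi_sph hx]
  have dH : HasFDerivAt (fun y => (H y ^ n)⁻¹) (-(H x ^ n)⁻¹ • (n * (H x)⁻¹) • fderiv ℝ H x) x := by
    have a1 : HasDerivAt (fun t : ℝ => (t ^ n)⁻¹) (-(H x ^ n)⁻¹ * (n * (H x)⁻¹)) (H x) := by
      have := (hasDerivAt_pow n (H x)).inv hHn
      refine this.congr_deriv ?_
      rcases n with _ | m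
      · simp
      · simp only [Nat.add_sub_cancel]
        field_simp
        ring
    have := a1.comp_hasFDerivAt x (h.H_diff hx0).hasFDerivAt
    rw [smul_smul]
    exact this
  have ds := (((hu x hx0).differentiableAt (by simp)).hasFDerivAt.mul
    ((h.W_cd hx0).differentiableAt (by simp)).hasFDerivAt).mul dH
  have : fderiv ℝ s x = _ := ds.fderiv
  rw [this]
  simp only [_root_.add_apply, _root_.smul_apply, smul_eq_mul, Pi.mul_apply]
  have nn : fderiv ℝ H x (gradient H x) = ‖gradient H x‖^2 := by
    rw [← inner_gradient_left, real_inner_self_eq_norm_sq]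
  rw [nn]
  simp only [s]
  rw [hWx]
  field_simp
  ring

end Ident

section Fin
open scoped ENNReal Topology ContDiff
variable {n : ℕ} {H : Euc n → ℝ}

lemma CBody.r_pos (h : CBody n H) {y : Euc n} (hy : y ≠ 0) : 0 < ‖gradient H y‖ := by
  rw [norm_pos_iff]
  intro h0
  have := h.euler hy
  rw [h0, inner_zero_left] at this
  exact (h.H_pos hy).ne this

lemma CBody.r_fd (h : CBody n H) {y : Euc n} (hy : y ≠ 0) :
    HasFDerivAt (fun z => ‖gradient H z‖)
      (innerSL ℝ (‖gradient H y‖⁻¹ • hA n H y (gradient H y))) y := by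
  have hr := h.r_pos hy
  have h1 := (hasStrictFDerivAt_norm_sq (gradient H y)).hasFDerivAt.comp y (h.G_fd hy)
  have h2 := h1.sqrt (by simpa using norm_pos_iff.1 hr)
  have : (fun z : Euc n => √(((fun x : Euc n => ‖x‖ ^ 2) ∘ gradient H) z)) = fun z => ‖gradient H z‖ := by
    ext z; exact Real.sqrt_sq (norm_nonneg _)
  rw [this] at h2
  refine h2.congr_fderiv (ContinuousLinearMap.ext fun w => ?_)
  have e : √(((fun x : Euc n => ‖x‖ ^ 2) ∘ gradient H) y) = ‖gradient H y‖ := Real.sqrt_sq (norm_nonneg _)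
  rw [e]
  simp only [_root_.smul_apply, ContinuousLinearMap.comp_apply, innerSL_apply_apply, real_inner_smul_left,
    smul_eq_mul, nsmul_eq_mul, Nat.cast_ofNat]
  rw [h.A_symm hy (gradient H y) w, real_inner_comm (hA n H y w)]
  field_simp

lemma CBody.r_cd (h : CBody n H) {y : Euc n} (hy : y ≠ 0) :
    ContDiffAt ℝ ∞ (fun z => ‖gradient H z‖) y :=
  (h.G_cd hy).norm ℝ (norm_pos_iff.1 (h.r_pos hy))

lemma CBody.sphGrad_r (h : CBody n H) {x : Euc n} (hx : x ≠ 0) (v : Euc n) :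
    ⟪sphGrad n (fun y => Real.log ‖gradient H y‖) x, v⟫ =
      (‖gradient H x‖ ^ 2)⁻¹ * ⟪hA n H x (gradient H x), v⟫ := by
  have e : (fun y => Real.log ‖gradient H (‖y‖⁻¹ • y)‖) =ᶠ[𝓝 x] fun y => Real.log ‖gradient H y‖ := by
    filter_upwards [isOpen_ne.mem_nhds hx] with z hz
    rw [h.G_homog hz (inv_pos.2 (norm_pos_iff.2 hz))]
  have d := ((h.r_fd hx).log (h.r_pos hx).ne').congr_of_eventuallyEq e
  unfold sphGrad
  rw [inner_gradient_left, d.fderiv]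
  simp only [_root_.smul_apply, innerSL_apply_apply, real_inner_smul_left, smul_eq_mul]
  rw [pow_two, mul_inv, mul_assoc]

variable {φ : ℝ → ℝ}

lemma CBody.f_cd (h : CBody n H) (hφ : ContDiffOn ℝ 1 φ (Set.Ioi (0 : ℝ))) {y : Euc n} (hy : y ≠ 0) :
    ContDiffAt ℝ 1 (fun z => φ ‖gradient H z‖) y :=
  ContDiffAt.comp (f := fun z => ‖gradient H z‖) y (hφ.contDiffAt (Ioi_mem_nhds (h.r_pos hy)))
    ((h.r_cd hy).of_le (by simp))

lemma CBody.f_fd (h : CBody n H) (hφ : ContDiffOn ℝ 1 φ (Set.Ioi (0 : ℝ))) {y : Euc n} (hy : y ≠ 0) :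
    HasFDerivAt (fun z => φ ‖gradient H z‖)
      (innerSL ℝ ((deriv φ ‖gradient H y‖ / ‖gradient H y‖) • hA n H y (gradient H y))) y := by
  have d : HasDerivAt φ (deriv φ ‖gradient H y‖) ‖gradient H y‖ :=
    ((hφ.contDiffAt (Ioi_mem_nhds (h.r_pos hy))).differentiableAt (by simp)).hasDerivAt
  have := d.comp_hasFDerivAt y (h.r_fd hy)
  refine HasFDerivAt.congr_fderiv (f := fun z => φ ‖gradient H z‖) this (ContinuousLinearMap.ext fun w => ?_)
  simp only [_root_.smul_apply, innerSL_apply_apply, real_inner_smul_left, smul_eq_mul]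
  ring

def hv (n : ℕ) (H : Euc n → ℝ) (φ : ℝ → ℝ) (l : Fin (n+1)) (x : Euc n) : Euc n :=
  ((deriv φ ‖gradient H x‖ / ‖gradient H x‖) * gradient H x l) • gradient H x
    + φ ‖gradient H x‖ • EuclideanSpace.single l 1

lemma CBody.G_l_cd (h : CBody n H) {y : Euc n} (hy : y ≠ 0) (l : Fin (n+1)) :
    ContDiffAt ℝ 1 (fun y => gradient H y l) y :=
  ((EuclideanSpace.proj l : Euc n →L[ℝ] ℝ).contDiff.contDiffAt).comp y ((h.G_cd hy).of_le (by simp))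

lemma CBody.F_strict (h : CBody n H) (hφ : ContDiffOn ℝ 1 φ (Set.Ioi (0 : ℝ))) (l : Fin (n+1))
    {x : Euc n} (hx : x ≠ 0) :
    HasStrictFDerivAt (fun z => φ ‖gradient H z‖ * gradient H z l)
      (innerSL ℝ (hA n H x (hv n H φ l x))) x := by
  refine ContDiffAt.hasStrictFDerivAt' (n := 1) ((h.f_cd hφ hx).mul (h.G_l_cd hx l)) ?_ (by simp)
  have d2 : HasFDerivAt (fun y => gradient H y l) ((EuclideanSpace.proj l : Euc n →L[ℝ] ℝ).comp (hA n H x)) x :=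
    (EuclideanSpace.proj l : Euc n →L[ℝ] ℝ).hasFDerivAt.comp x (h.G_fd hx)
  refine ((h.f_fd hφ hx).mul d2).congr_fderiv (ContinuousLinearMap.ext fun w => ?_)
  have e : ⟪hA n H x (EuclideanSpace.single l 1), w⟫ = hA n H x w l := by
    rw [h.A_symm hx]; simp [EuclideanSpace.inner_single_right]
  simp only [_root_.add_apply, _root_.smul_apply, innerSL_apply_apply, real_inner_smul_left, smul_eq_mul,
    hv, map_add, map_smul, inner_add_left, e, ContinuousLinearMap.comp_apply]
  have e2 : (EuclideanSpace.proj l : Euc n →L[ℝ] ℝ) (hA n H x w) = hA n H x w l := rfl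
  rw [e2]
  ring

lemma CBody.v_cont (h : CBody n H) (hφ : ContDiffOn ℝ 1 φ (Set.Ioi (0 : ℝ))) (l : Fin (n+1))
    {x : Euc n} (hx : x ≠ 0) : ContinuousAt (hv n H φ l) x := by
  have cd : ContinuousAt (deriv φ) ‖gradient H x‖ :=
    (hφ.continuousOn_deriv_of_isOpen isOpen_Ioi le_rfl).continuousAt (Ioi_mem_nhds (h.r_pos hx))
  have cr : ContinuousAt (fun z => ‖gradient H z‖) x := (h.r_cd hx).continuousAt
  have c1 : ContinuousAt (fun z => deriv φ ‖gradient H z‖) x :=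
    ContinuousAt.comp (f := fun z => ‖gradient H z‖) cd cr
  exact (((c1.div cr (h.r_pos hx).ne').mul (h.G_l_cd hx l).continuousAt).smul (h.G_cd hx).continuousAt).add
    ((h.f_cd hφ hx).continuousAt.smul continuousAt_const)

lemma CBody.point (h : CBody n H) (hφ : ContDiffOn ℝ 1 φ (Set.Ioi (0 : ℝ)))
    (hφpos : ∀ t ∈ Set.Ioi (0 : ℝ), 0 < φ t) {x : Euc n} (hx : x ≠ 0) :
    volDens n H x * ((φ ‖gradient H x‖) ^ 2 *
          ⟪sphGrad n (logQ n H) x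
              - (‖gradient H x‖ * (deriv φ ‖gradient H x‖ / φ ‖gradient H x‖)) ^ 2
                  • sphGrad n (fun y => Real.log ‖gradient H y‖) x,
            H x • gradient H x⟫) =
    hI n H (fun y => φ ‖gradient H y‖ ^ 2) x + ∑ l, (n * ((φ ‖gradient H x‖ * gradient H x l) ^ 2 * hD n H x)
      - H x * ⟪hA n H x (hv n H φ l x), hv n H φ l x⟫ * hD n H x) := by
  have hr := h.r_pos hx
  have hf := hφpos _ hr
  have du : fderiv ℝ (fun y => φ ‖gradient H y‖ ^ 2) x (gradient H x) =
      2 * φ ‖gradient H x‖ * (deriv φ ‖gradient H x‖ / ‖gradient H x‖) * ⟪hA n H x (gradient H x), gradient H x⟫ := by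
    rw [((h.f_fd hφ hx).pow 2).fderiv]
    simp [real_inner_smul_left]
    ring
  have s1 : ∑ l, gradient H x l ^ 2 = ‖gradient H x‖ ^ 2 := by
    rw [EuclideanSpace.real_norm_sq_eq]
  have s2 : ∑ l, gradient H x l * hA n H x (gradient H x) l = ⟪hA n H x (gradient H x), gradient H x⟫ := by
    rw [PiLp.inner_apply]; simp
  have ev : ∀ l, ⟪hA n H x (hv n H φ l x), hv n H φ l x⟫ =
      (deriv φ ‖gradient H x‖ / ‖gradient H x‖) ^ 2 * ⟪hA n H x (gradient H x), gradient H x⟫ * gradient H x l ^ 2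
      + 2 * φ ‖gradient H x‖ * (deriv φ ‖gradient H x‖ / ‖gradient H x‖) * (gradient H x l * hA n H x (gradient H x) l)
      + φ ‖gradient H x‖ ^ 2 * ⟪hA n H x (EuclideanSpace.single l 1), EuclideanSpace.single l 1⟫ := by
    intro l
    have e : ⟪hA n H x (gradient H x), EuclideanSpace.single l 1⟫ = hA n H x (gradient H x) l := by
      simp [EuclideanSpace.inner_single_right]
    have e' := h.A_symm hx (EuclideanSpace.single l 1) (gradient H x)
    rw [e] at e'
    simp only [hv, map_add, map_smul, inner_add_left, inner_add_right, real_inner_smul_left,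
      real_inner_smul_right, e, e']
    ring
  have s3 : ∑ l, (n * ((φ ‖gradient H x‖ * gradient H x l) ^ 2 * hD n H x)
      - H x * ⟪hA n H x (hv n H φ l x), hv n H φ l x⟫ * hD n H x) =
      n * φ ‖gradient H x‖ ^ 2 * hD n H x * ‖gradient H x‖ ^ 2
      - H x * hD n H x * ((deriv φ ‖gradient H x‖ / ‖gradient H x‖) ^ 2 * ⟪hA n H x (gradient H x), gradient H x⟫ * ‖gradient H x‖ ^ 2
      + 2 * φ ‖gradient H x‖ * (deriv φ ‖gradient H x‖ / ‖gradient H x‖) * ⟪hA n H x (gradient H x), gradient H x⟫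
      + φ ‖gradient H x‖ ^ 2 * ∑ l, ⟪hA n H x (EuclideanSpace.single l 1), EuclideanSpace.single l 1⟫) := by
    have e4 : ∀ l, n * ((φ ‖gradient H x‖ * gradient H x l) ^ 2 * hD n H x)
        - H x * ⟪hA n H x (hv n H φ l x), hv n H φ l x⟫ * hD n H x =
        (n * φ ‖gradient H x‖ ^ 2 * hD n H x - H x * hD n H x * ((deriv φ ‖gradient H x‖ / ‖gradient H x‖) ^ 2 * ⟪hA n H x (gradient H x), gradient H x⟫)) * gradient H x l ^ 2
        - (H x * hD n H x * (2 * φ ‖gradient H x‖ * (deriv φ ‖gradient H x‖ / ‖gradient H x‖))) * (gradient H x l * hA n H x (gradient H x) l)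
        - (H x * hD n H x * φ ‖gradient H x‖ ^ 2) * ⟪hA n H x (EuclideanSpace.single l 1), EuclideanSpace.single l 1⟫ := by
      intro l; rw [ev l]; ring
    simp_rw [e4]
    rw [Finset.sum_sub_distrib, Finset.sum_sub_distrib, ← Finset.mul_sum, ← Finset.mul_sum, ← Finset.mul_sum, s1, s2]
    ring
  rw [s3, hI, du, h.volDens_eq hx, inner_sub_left, real_inner_smul_right, real_inner_smul_left,
    real_inner_smul_right, h.sphGrad_r hx]
  field_simp
  ring

end Fin

/-- For a smooth, strictly convex body `K ⊂ ℝ^{n+1}` with the origin in its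
interior, radial function `r = |X|`, and `f = φ(r)` with `φ : (0,∞) → (0,∞)` of class `C¹`:
`∫ f² ⟨∇̄ log(h^{n+2}/𝒦) − (r (log φ)'(r))² ∇̄ log r, hX⟩ dV ≤ n |∫ f X dV|² / ∫ dV`. -/
theorem local_BM_inequality_radial
    (n : ℕ) (hn : 2 ≤ n)
    (H : Euc n → ℝ) (K : Set (Euc n))
    (hK : K = {y : Euc n | ∀ x : Euc n, ⟪x, y⟫ ≤ H x})
    (hhomog : ∀ c : ℝ, 0 < c → ∀ x : Euc n, H (c • x) = c * H x)
    (hconv : ConvexOn ℝ Set.univ H)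
    (hsmooth : ContDiffOn ℝ (⊤ : ℕ∞) H {(0 : Euc n)}ᶜ)
    (hpos : ∀ x ∈ sphere (0 : Euc n) 1, 0 < H x)
    (hposdef : ∀ x ∈ sphere (0 : Euc n) 1, (bmat n H x).PosDef)
    (φ : ℝ → ℝ)
    (hφ : ContDiffOn ℝ 1 φ (Set.Ioi (0 : ℝ)))
    (hφpos : ∀ t ∈ Set.Ioi (0 : ℝ), 0 < φ t) :
    (∫ x : sphere (0 : Euc n) 1,
        volDens n H x * ((φ ‖gradient H x‖) ^ 2 *
          ⟪sphGrad n (logQ n H) x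
              - (‖gradient H x‖ * (deriv φ ‖gradient H x‖ / φ ‖gradient H x‖)) ^ 2
                  • sphGrad n (fun y => Real.log ‖gradient H y‖) x,
            H x • gradient H x⟫)
        ∂(sphMeasure n))
      ≤ (n : ℝ) * ‖∫ x : sphere (0 : Euc n) 1,
            volDens n H x • (φ ‖gradient H x‖ • gradient H x) ∂(sphMeasure n)‖ ^ 2
          / ∫ x : sphere (0 : Euc n) 1, volDens n H x ∂(sphMeasure n) := by
  have h : CBody n H := ⟨hhomog, hconv, hsmooth, hpos, hposdef⟩
  have ne : ∀ x : sphere (0 : Euc n) 1, (x : Euc n) ≠ 0 := fun x => unit_ne x.2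
  obtain ⟨iI, zI⟩ := h.ibp (u := fun y => φ ‖gradient H y‖ ^ 2) (fun y hy => (h.f_cd hφ hy).pow 2)
    (fun y hy c hc => by rw [h.G_homog hy hc])
  have cD : Continuous fun x : sphere (0 : Euc n) 1 => hD n H x := h.D_cont
  have cH : Continuous fun x : sphere (0 : Euc n) 1 => H x :=
    sph_cont fun x hx => (h.H_cd (unit_ne hx)).continuousAt
  have cG : Continuous fun x : sphere (0 : Euc n) 1 => gradient H x :=
    sph_cont fun x hx => (h.G_cd (unit_ne hx)).continuousAt
  have cf : Continuous fun x : sphere (0 : Euc n) 1 => φ ‖gradient H x‖ :=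
    sph_cont (f := fun x => φ ‖gradient H x‖) fun x hx => (h.f_cd hφ (unit_ne hx)).continuousAt
  have cF : ∀ l, Continuous fun x : sphere (0 : Euc n) 1 => φ ‖gradient H x‖ * gradient H x l := fun l =>
    sph_cont (f := fun x => φ ‖gradient H x‖ * gradient H x l) fun x hx =>
      (h.f_cd hφ (unit_ne hx)).continuousAt.mul (h.G_l_cd (unit_ne hx) l).continuousAt
  have cv : ∀ l, Continuous fun x : sphere (0 : Euc n) 1 => hv n H φ l x := fun l =>
    sph_cont fun x hx => h.v_cont hφ l (unit_ne hx)
  have cA : Continuous fun x : sphere (0 : Euc n) 1 => hA n H x :=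
    sph_cont fun x hx => (h.A_cd (unit_ne hx)).continuousAt
  have i1 : ∀ l, Integrable (fun x : sphere (0 : Euc n) 1 => (n : ℝ) * ((φ ‖gradient H x‖ * gradient H x l) ^ 2 * hD n H x)) (sphMeasure n) :=
    fun l => sph_int (continuous_const.mul (((cF l).pow 2).mul cD))
  have i2 : ∀ l, Integrable (fun x : sphere (0 : Euc n) 1 => H x * ⟪hA n H x (hv n H φ l x), hv n H φ l x⟫ * hD n H x) (sphMeasure n) :=
    fun l => sph_int ((cH.mul ((cA.clm_apply (cv l)).inner (cv l))).mul cD)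
  have i3 : ∀ l, Integrable (fun x : sphere (0 : Euc n) 1 => (n : ℝ) * ((φ ‖gradient H x‖ * gradient H x l) ^ 2 * hD n H x)
      - H x * ⟪hA n H x (hv n H φ l x), hv n H φ l x⟫ * hD n H x) (sphMeasure n) :=
    fun l => (i1 l).sub (i2 l)
  have eV : ∫ x : sphere (0 : Euc n) 1, volDens n H x ∂(sphMeasure n) = ∫ x : sphere (0 : Euc n) 1, hD n H x ∂(sphMeasure n) :=
    integral_congr_ae (Filter.Eventually.of_forall fun x => h.volDens_eq (ne x))
  have eL := integral_congr_ae (μ := sphMeasure n)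
    (Filter.Eventually.of_forall fun x : sphere (0 : Euc n) 1 => h.point hφ hφpos (ne x))
  rw [eL, integral_add iI (integrable_finsetSum _ fun l _ => i3 l), zI, zero_add,
    integral_finsetSum _ fun l _ => i3 l, eV]
  have key : ∀ l, ∫ x : sphere (0 : Euc n) 1, ((n : ℝ) * ((φ ‖gradient H x‖ * gradient H x l) ^ 2 * hD n H x)
      - H x * ⟪hA n H x (hv n H φ l x), hv n H φ l x⟫ * hD n H x) ∂sphMeasure n ≤
      n * (∫ x : sphere (0 : Euc n) 1, (φ ‖gradient H x‖ * gradient H x l) * hD n H x ∂sphMeasure n) ^ 2 /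
        ∫ x : sphere (0 : Euc n) 1, hD n H x ∂sphMeasure n := by
    intro l
    rw [integral_sub (i1 l) (i2 l), integral_const_mul]
    exact h.poincare (F := fun z => φ ‖gradient H z‖ * gradient H z l)
      (fun x hx => h.F_strict hφ l (unit_ne hx)) (fun x hx => h.v_cont hφ l (unit_ne hx))
  refine (Finset.sum_le_sum fun l _ => key l).trans (le_of_eq ?_)
  rw [EuclideanSpace.real_norm_sq_eq, ← Finset.sum_div, ← Finset.mul_sum]
  congr 2
  refine Finset.sum_congr rfl fun l _ => ?_
  congr 1
  have iv : Integrable (fun x : sphere (0 : Euc n) 1 => volDens n H x • (φ ‖gradient H x‖ • gradient H x)) (sphMeasure n) := by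
    have : (fun x : sphere (0 : Euc n) 1 => volDens n H x • (φ ‖gradient H x‖ • gradient H x)) =
        fun x : sphere (0 : Euc n) 1 => hD n H x • (φ ‖gradient H x‖ • gradient H x) := by
      ext1 x; rw [h.volDens_eq (ne x)]
    rw [this]
    exact sph_int (cD.smul (cf.smul cG))
  have := (EuclideanSpace.proj l : Euc n →L[ℝ] ℝ).integral_comp_comm iv
  refine Eq.trans ?_ this
  refine integral_congr_ae (Filter.Eventually.of_forall fun x => ?_)
  have e2 : (EuclideanSpace.proj l : Euc n →L[ℝ] ℝ) (volDens n H x • (φ ‖gradient H x‖ • gradient H x)) =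
    volDens n H x * (φ ‖gradient H x‖ * gradient H x l) := rfl
  refine Eq.trans ?_ e2.symm
  rw [h.volDens_eq (ne x)]
  ring
end
end

section
/- Let K ⊂ ℝ^{n+1} be a smooth, strictly convex body with the origin in its interior, and let K* = {y ∈ ℝ^{n+1} : ⟨x,y⟩ ≤ 1 for all x ∈ K} be its polar body. Denote by h, 𝒦 the support function and Gauss curvature of ∂K, and by h*, 𝒦* those of ∂K*. Then for every x ∈ S^n, with x* := X(x)/|X(x)| where X = Dh is the inverse Gauss map of ∂K, one has h(x)^{n+2} (h*(x*))^{n+2} / (𝒦(x) 𝒦*(x*)) = 1. -/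
open MeasureTheory Matrix Metric
open scoped RealInnerProductSpace

noncomputable section

lemma pd_det_conj {m : Type*} [Fintype m] [DecidableEq m] (A : Matrix m m ℝ) (x v : m → ℝ)
    (c s : ℝ) (hxx : x ⬝ᵥ x = 1) (hxv : x ⬝ᵥ v = s) (h1 : x ᵥ* A = 0) (h2 : A *ᵥ x = 0) :
    (A + c • vecMulVec v v).det = s ^ 2 * (A + c • vecMulVec x x).det := by
  have hE : (1 + vecMulVec (v - x) x).det = s := by
    rw [vecMulVec_eq Unit, det_one_add_replicateCol_mul_replicateRow, dotProduct_sub, hxx, hxv]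
    ring
  have key : (1 + vecMulVec (v - x) x) * (A + c • vecMulVec x x) * (1 + vecMulVec (v - x) x)ᵀ
      = A + c • vecMulVec v v := by
    have e1 : (1 + vecMulVec (v - x) x) * (A + c • vecMulVec x x) = A + c • vecMulVec v x := by
      simp only [add_mul, mul_add, one_mul, vecMulVec_mul, h1, vecMul_vecMulVec, Matrix.mul_smul,
        vecMulVec_mul_vecMulVec, hxx]
      ext i j
      simp [vecMulVec_apply]
      ring
    rw [e1, transpose_add, transpose_one, transpose_vecMulVec]
    simp only [add_mul, mul_add, mul_one, mul_vecMulVec, h2, smul_mulVec, vecMulVec_mulVec, Matrix.smul_mul,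
        vecMulVec_mul_vecMulVec, hxx]
    ext i j
    simp [vecMulVec_apply]
    ring
  rw [← key, det_mul, det_mul, det_transpose, hE]
  ring

lemma pd_det {m : Type*} [Fintype m] [DecidableEq m] (A T : Matrix m m ℝ) (x v : m → ℝ)
    (c d s : ℝ) (hs : 0 < s) (hcd : c * d = s)
    (hxx : x ⬝ᵥ x = 1) (hvv : v ⬝ᵥ v = 1) (hxv : x ⬝ᵥ v = s)
    (h1 : x ᵥ* A = 0) (h2 : A *ᵥ x = 0) (h3 : v ᵥ* T = 0) (h4 : T *ᵥ v = 0)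
    (hAT : A * T = s⁻¹ • (1 - s⁻¹ • vecMulVec v x)) :
    (A + c • vecMulVec x x).det * (T + d • vecMulVec v v).det = (s⁻¹) ^ Fintype.card m := by
  have e1 := pd_det_conj A x v c s hxx hxv h1 h2
  have e2 := pd_det_conj T v x d s hvv (by rw [dotProduct_comm, hxv]) h3 h4
  have key : (A + c • vecMulVec v v) * (T + d • vecMulVec x x)
      = s⁻¹ • (1 + vecMulVec ((s ^ 3 - s⁻¹) • v) x) := by
    simp only [add_mul, mul_add, Matrix.mul_smul, Matrix.smul_mul, vecMulVec_mul, mul_vecMulVec,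
      h2, h3, hAT, smul_mulVec, vecMulVec_mulVec, vecMulVec_mul_vecMulVec, dotProduct_comm v x, hxv]
    ext i j
    simp [vecMulVec_apply]
    have : c * (d * (v i * (s * x j))) = s ^ 2 * (v i * x j) := by
      calc _ = (c * d) * s * (v i * x j) := by ring
        _ = _ := by rw [hcd]; ring
    field_simp
    linear_combination (s ^ 2) * this
  have hdet := congrArg det key
  rw [det_mul, e1, e2, det_smul, vecMulVec_eq Unit ((s ^ 3 - s⁻¹) • v) x, det_one_add_replicateCol_mul_replicateRow,
    dotProduct_smul, hxv] at hdet
  have : (1 + (s ^ 3 - s⁻¹) • s) = s ^ 4 := by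
    simp; field_simp; ring
  rw [this] at hdet
  have h4 : s ^ 4 ≠ 0 := by positivity
  apply mul_left_cancel₀ h4
  linear_combination hdet

lemma pd_fderiv_homog (n : ℕ) (H : Euc n → ℝ)
    (hhomog : ∀ c : ℝ, 0 < c → ∀ x : Euc n, H (c • x) = c * H x) (c : ℝ) (hc : 0 < c)
    (x : Euc n) : fderiv ℝ H (c • x) = fderiv ℝ H x := by
  have h1 : fderiv ℝ (fun y => H (c • y)) x = c • fderiv ℝ H (c • x) := by
    rw [fderiv_comp_smul]
  have h2 : (fun y => H (c • y)) = c • H := by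
    ext y; simp [hhomog c hc]
  rw [h2, fderiv_const_smul_field] at h1
  exact (smul_right_injective _ hc.ne' h1).symm

lemma pd_ehess_homog (n : ℕ) (H : Euc n → ℝ)
    (hhomog : ∀ c : ℝ, 0 < c → ∀ x : Euc n, H (c • x) = c * H x) (c : ℝ) (hc : 0 < c)
    (x : Euc n) : c • ehess n H (c • x) = ehess n H x := by
  ext i j
  simp only [ehess, Matrix.smul_apply, Matrix.of_apply]
  have h1 : fderiv ℝ (fun y => (fun y => fderiv ℝ H y (EuclideanSpace.single j 1)) (c • y)) x
      = c • fderiv ℝ (fun y => fderiv ℝ H y (EuclideanSpace.single j 1)) (c • x) := by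
    rw [fderiv_comp_smul (f := fun y => fderiv ℝ H y (EuclideanSpace.single j 1))]
  simp only [pd_fderiv_homog n H hhomog c hc] at h1
  rw [h1]
  simp

lemma pd_grad_apply (n : ℕ) (H : Euc n → ℝ) (x : Euc n) (j : Fin (n + 1)) :
    gradient H x j = fderiv ℝ H x (EuclideanSpace.single j 1) := by
  have : ⟪gradient H x, EuclideanSpace.single j (1:ℝ)⟫ = fderiv ℝ H x (EuclideanSpace.single j 1) := by
    simp [gradient]
  rw [← this, EuclideanSpace.inner_single_right]
  simp

lemma pd_inner_grad (n : ℕ) (H : Euc n → ℝ) (x y : Euc n) :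
    ⟪gradient H x, y⟫ = fderiv ℝ H x y := by
  simp [gradient]

lemma pd_zero (n : ℕ) (H : Euc n → ℝ)
    (hhomog : ∀ c : ℝ, 0 < c → ∀ x : Euc n, H (c • x) = c * H x) : H 0 = 0 := by
  have := hhomog 2 (by norm_num) 0
  rw [smul_zero] at this
  linarith

lemma pd_pos (n : ℕ) (H : Euc n → ℝ)
    (hhomog : ∀ c : ℝ, 0 < c → ∀ x : Euc n, H (c • x) = c * H x)
    (hpos : ∀ x ∈ sphere (0 : Euc n) 1, 0 < H x) (x : Euc n) (hx : x ≠ 0) : 0 < H x := by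
  have hn : 0 < ‖x‖ := norm_pos_iff.2 hx
  have h1 := hpos (‖x‖⁻¹ • x) (by simp [norm_smul, hn.ne'])
  rw [hhomog _ (by positivity)] at h1
  exact pos_of_mul_pos_right h1 (by positivity)

lemma pd_contDiffAt (n : ℕ) (H : Euc n → ℝ)
    (hsmooth : ContDiffOn ℝ (⊤ : ℕ∞) H {(0 : Euc n)}ᶜ) (x : Euc n) (hx : x ≠ 0) :
    ContDiffAt ℝ (⊤ : ℕ∞) H x :=
  hsmooth.contDiffAt (isOpen_compl_singleton.mem_nhds hx)

lemma pd_diff (n : ℕ) (H : Euc n → ℝ)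
    (hsmooth : ContDiffOn ℝ (⊤ : ℕ∞) H {(0 : Euc n)}ᶜ) (x : Euc n) (hx : x ≠ 0) :
    DifferentiableAt ℝ H x :=
  (pd_contDiffAt n H hsmooth x hx).differentiableAt (by simp)

lemma pd_diff2 (n : ℕ) (H : Euc n → ℝ)
    (hsmooth : ContDiffOn ℝ (⊤ : ℕ∞) H {(0 : Euc n)}ᶜ) (x : Euc n) (hx : x ≠ 0) :
    DifferentiableAt ℝ (fderiv ℝ H) x :=
  ((pd_contDiffAt n H hsmooth x hx).fderiv_right (m := 1) (by norm_num; exact WithTop.coe_le_coe.2 le_top)).differentiableAt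
    (by simp)

lemma pd_euler (n : ℕ) (H : Euc n → ℝ)
    (hhomog : ∀ c : ℝ, 0 < c → ∀ x : Euc n, H (c • x) = c * H x)
    (hsmooth : ContDiffOn ℝ (⊤ : ℕ∞) H {(0 : Euc n)}ᶜ) (x : Euc n) (hx : x ≠ 0) :
    fderiv ℝ H x x = H x := by
  have h0 : HasDerivAt (fun t : ℝ => t • x) x 1 := by
    simpa using (hasDerivAt_id (1:ℝ)).smul_const x
  have h1 : HasFDerivAt H (fderiv ℝ H x) ((1:ℝ) • x) := by
    rw [one_smul]; exact (pd_diff n H hsmooth x hx).hasFDerivAt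
  have h2 := h1.comp_hasDerivAt (1:ℝ) h0
  have h3 : HasDerivAt (fun t : ℝ => t * H x) (H x) 1 := by
    simpa using (hasDerivAt_id (1:ℝ)).mul_const (H x)
  refine h2.unique (h3.congr_of_eventuallyEq ?_)
  filter_upwards [lt_mem_nhds (zero_lt_one (α := ℝ))] with t ht
  simp [hhomog t ht]

lemma pd_euler2 (n : ℕ) (H : Euc n → ℝ)
    (hhomog : ∀ c : ℝ, 0 < c → ∀ x : Euc n, H (c • x) = c * H x)
    (hsmooth : ContDiffOn ℝ (⊤ : ℕ∞) H {(0 : Euc n)}ᶜ) (x : Euc n) (hx : x ≠ 0)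
    (e : Euc n) :
    fderiv ℝ (fun y => fderiv ℝ H y e) x x = 0 := by
  have h0 : HasDerivAt (fun t : ℝ => t • x) x 1 := by
    simpa using (hasDerivAt_id (1:ℝ)).smul_const x
  have h1 : HasFDerivAt (fun y => fderiv ℝ H y e) (fderiv ℝ (fun y => fderiv ℝ H y e) x)
      ((1:ℝ) • x) := by
    rw [one_smul]
    exact ((pd_diff2 n H hsmooth x hx).clm_apply (differentiableAt_const e)).hasFDerivAt
  have h2 := h1.comp_hasDerivAt (1:ℝ) h0
  refine h2.unique ((hasDerivAt_const (1:ℝ) (fderiv ℝ H x e)).congr_of_eventuallyEq ?_)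
  filter_upwards [lt_mem_nhds (zero_lt_one (α := ℝ))] with t ht
  simp [pd_fderiv_homog n H hhomog t ht]

lemma pd_sum (n : ℕ) (x : Euc n) :
    x = ∑ i, x i • EuclideanSpace.single i (1:ℝ) := by
  ext j
  simp [Pi.single_apply]

lemma pd_vecMul (n : ℕ) (H : Euc n → ℝ)
    (hhomog : ∀ c : ℝ, 0 < c → ∀ x : Euc n, H (c • x) = c * H x)
    (hsmooth : ContDiffOn ℝ (⊤ : ℕ∞) H {(0 : Euc n)}ᶜ) (x : Euc n) (hx : x ≠ 0) :
    (fun i => x i) ᵥ* ehess n H x = 0 := by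
  ext j
  have h := pd_euler2 n H hhomog hsmooth x hx (EuclideanSpace.single j 1)
  rw [congrArg (fderiv ℝ (fun y => fderiv ℝ H y (EuclideanSpace.single j 1)) x) (pd_sum n x),
    map_sum] at h
  simpa [vecMul, dotProduct, ehess] using h

lemma pd_symm (n : ℕ) (H : Euc n → ℝ) (x : Euc n) (h : (bmat n H x).PosDef) :
    (ehess n H x)ᵀ = ehess n H x := by
  have h1 := h.isHermitian
  ext i j
  have := h1.apply i j
  simp [bmat] at this
  simp only [transpose_apply]
  linear_combination this

lemma pd_support (n : ℕ) (H : Euc n → ℝ)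
    (hhomog : ∀ c : ℝ, 0 < c → ∀ x : Euc n, H (c • x) = c * H x)
    (hconv : ConvexOn ℝ Set.univ H)
    (hsmooth : ContDiffOn ℝ (⊤ : ℕ∞) H {(0 : Euc n)}ᶜ) (x : Euc n) (hx : x ≠ 0) (y : Euc n) :
    fderiv ℝ H x y ≤ H y := by
  have hsub : ∀ t : ℝ, 0 < t → H (x + t • y) ≤ H x + t * H y := by
    intro t ht
    have := hconv.2 (Set.mem_univ x) (Set.mem_univ (t • y)) (by norm_num : (0:ℝ) ≤ 1/2)
      (by norm_num : (0:ℝ) ≤ 1/2) (by norm_num)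
    rw [← smul_add, hhomog _ (by norm_num), hhomog t ht] at this
    simp only [smul_eq_mul] at this
    linarith
  have h0 : HasDerivAt (fun t : ℝ => x + t • y) y 0 := by
    simpa using ((hasDerivAt_id (0:ℝ)).smul_const y).const_add x
  have h1 : HasFDerivAt H (fderiv ℝ H x) (x + (0:ℝ) • y) := by
    rw [zero_smul, add_zero]; exact (pd_diff n H hsmooth x hx).hasFDerivAt
  have h2 := h1.comp_hasDerivAt (0:ℝ) h0
  have h3 := h2.tendsto_slope_zero_right
  refine le_of_tendsto h3 ?_
  filter_upwards [self_mem_nhdsWithin] with t ht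
  have ht : 0 < t := ht
  simp only [Function.comp, zero_add, zero_smul, add_zero, smul_eq_mul]
  rw [inv_mul_le_iff₀ ht]
  linarith [hsub t ht]

lemma pd_polar (n : ℕ)
    (H : Euc n → ℝ) (K : Set (Euc n))
    (hK : K = {y : Euc n | ∀ x : Euc n, ⟪x, y⟫ ≤ H x})
    (hhomog : ∀ c : ℝ, 0 < c → ∀ x : Euc n, H (c • x) = c * H x)
    (hconv : ConvexOn ℝ Set.univ H)
    (hsmooth : ContDiffOn ℝ (⊤ : ℕ∞) H {(0 : Euc n)}ᶜ)
    (hpos : ∀ x ∈ sphere (0 : Euc n) 1, 0 < H x)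
    (Hs : Euc n → ℝ) (Kstar : Set (Euc n))
    (hKstar : Kstar = {y : Euc n | ∀ x ∈ K, ⟪x, y⟫ ≤ 1})
    (hKstar' : Kstar = {y : Euc n | ∀ x : Euc n, ⟪x, y⟫ ≤ Hs x})
    (hhomogs : ∀ c : ℝ, 0 < c → ∀ x : Euc n, Hs (c • x) = c * Hs x)
    (hconvs : ConvexOn ℝ Set.univ Hs)
    (hsmooths : ContDiffOn ℝ (⊤ : ℕ∞) Hs {(0 : Euc n)}ᶜ)
    (x : Euc n) (hx : x ≠ 0) :
    gradient H x ≠ 0 ∧ Hs (gradient H x) = 1 ∧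
      ∀ e, fderiv ℝ Hs (gradient H x) e = (H x)⁻¹ * ⟪x, e⟫ := by
  have hHx := pd_pos n H hhomog hpos x hx
  have hGx : ⟪gradient H x, x⟫ = H x := by
    rw [pd_inner_grad, pd_euler n H hhomog hsmooth x hx]
  have hG0 : gradient H x ≠ 0 := by
    intro h0
    rw [h0, inner_zero_left] at hGx
    linarith
  have hGK : gradient H x ∈ K := by
    rw [hK]
    intro y
    rw [real_inner_comm, pd_inner_grad]
    exact pd_support n H hhomog hconv hsmooth x hx y
  -- `⟪y, z⟫ ≤ Hs z` for `z` arbitrary and `y = x / H x`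
  have hmem : (H x)⁻¹ • x ∈ Kstar := by
    rw [hKstar]
    intro y hy
    rw [hK] at hy
    have := hy x
    rw [inner_smul_right, real_inner_comm, inv_mul_le_iff₀ hHx]
    linarith
  have hle : ∀ z, (H x)⁻¹ * ⟪x, z⟫ ≤ Hs z := by
    intro z
    have h := hmem
    rw [hKstar'] at h
    have := h z
    rwa [inner_smul_right, real_inner_comm] at this
  have hGs : gradient Hs (gradient H x) ∈ Kstar := by
    rw [hKstar']
    intro y
    rw [real_inner_comm, pd_inner_grad]
    exact pd_support n Hs hhomogs hconvs hsmooths _ hG0 y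
  have hone : Hs (gradient H x) = 1 := by
    apply le_antisymm
    · rw [← pd_euler n Hs hhomogs hsmooths _ hG0, ← pd_inner_grad, real_inner_comm]
      rw [hKstar] at hGs
      exact hGs _ hGK
    · have := hle (gradient H x)
      rw [real_inner_comm, hGx, inv_mul_cancel₀ hHx.ne'] at this
      exact this
  refine ⟨hG0, hone, ?_⟩
  set X := gradient H x with hX
  have hd : HasFDerivAt (fun z => Hs z - (H x)⁻¹ * ⟪x, z⟫)
      (fderiv ℝ Hs X - (H x)⁻¹ • (innerSL ℝ x)) X :=
    (pd_diff n Hs hsmooths X hG0).hasFDerivAt.sub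
      (((innerSL ℝ x).hasFDerivAt).const_mul _)
  have hmin : IsLocalMin (fun z => Hs z - (H x)⁻¹ * ⟪x, z⟫) X := by
    apply Filter.Eventually.of_forall
    intro z
    have e : ⟪x, X⟫ = H x := by rw [real_inner_comm]; exact hGx
    simp only [hone, e, inv_mul_cancel₀ hHx.ne', sub_self]
    linarith [hle z]
  have h0 := hmin.hasFDerivAt_eq_zero hd
  intro e
  have := congrArg (fun L => L e) h0
  simp at this
  linarith

lemma pd_chain (n : ℕ)
    (H Hs : Euc n → ℝ)
    (hsmooth : ContDiffOn ℝ (⊤ : ℕ∞) H {(0 : Euc n)}ᶜ)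
    (hsmooths : ContDiffOn ℝ (⊤ : ℕ∞) Hs {(0 : Euc n)}ᶜ)
    (hHp : ∀ y : Euc n, y ≠ 0 → 0 < H y)
    (hG : ∀ y : Euc n, y ≠ 0 → gradient H y ≠ 0 ∧
      ∀ e, fderiv ℝ Hs (gradient H y) e = (H y)⁻¹ * ⟪y, e⟫)
    (x : Euc n) (hx : x ≠ 0) :
    ehess n H x * ehess n Hs (gradient H x) =
      (H x)⁻¹ • (1 - (H x)⁻¹ • vecMulVec (fun i => gradient H x i) (fun i => x i)) := by
  ext i k
  have hh := hHp x hx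
  have d1 : DifferentiableAt ℝ (gradient H) x :=
    ((InnerProductSpace.toDual ℝ (Euc n)).symm.toContinuousLinearEquiv.toContinuousLinearMap.differentiableAt).comp x
      (pd_diff2 n H hsmooth x hx)
  have d2 : DifferentiableAt ℝ (fun z => fderiv ℝ Hs z (EuclideanSpace.single k 1)) (gradient H x) :=
    (pd_diff2 n Hs hsmooths _ (hG x hx).1).clm_apply (differentiableAt_const _)
  have c1 := (d2.hasFDerivAt.comp x d1.hasFDerivAt)
  have c2 : HasFDerivAt (fun y : Euc n => (H y)⁻¹ * y k)
      ((H x)⁻¹ • (EuclideanSpace.proj k : Euc n →L[ℝ] ℝ) + x k • (-(H x ^ 2)⁻¹ • fderiv ℝ H x)) x := by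
    have a1 : HasFDerivAt (fun y : Euc n => (H y)⁻¹) (-(H x ^ 2)⁻¹ • fderiv ℝ H x) x :=
      (hasDerivAt_inv hh.ne').comp_hasFDerivAt x (pd_diff n H hsmooth x hx).hasFDerivAt
    have a2 : HasFDerivAt (fun y : Euc n => y k) (EuclideanSpace.proj k : Euc n →L[ℝ] ℝ) x :=
      (EuclideanSpace.proj k : Euc n →L[ℝ] ℝ).hasFDerivAt
    exact a1.mul a2
  have heq := c1.unique (c2.congr_of_eventuallyEq (by
    filter_upwards [isOpen_compl_singleton.mem_nhds hx] with y hy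
    simp only [Function.comp]
    rw [(hG y hy).2, EuclideanSpace.inner_single_right]
    simp))
  have h := congrArg (fun L => L (EuclideanSpace.single i (1:ℝ))) heq
  simp only [ContinuousLinearMap.comp_apply] at h
  have hcomp : ∀ j, (fderiv ℝ (gradient H) x (EuclideanSpace.single i (1:ℝ))) j = ehess n H x i j := by
    intro j
    have b1 : HasFDerivAt (fun y => gradient H y j)
        ((EuclideanSpace.proj j : Euc n →L[ℝ] ℝ).comp (fderiv ℝ (gradient H) x)) x :=
      (EuclideanSpace.proj j : Euc n →L[ℝ] ℝ).hasFDerivAt.comp x d1.hasFDerivAt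
    simp only [pd_grad_apply] at b1
    simp only [ehess, Matrix.of_apply]
    rw [b1.fderiv]
    rfl
  rw [pd_sum n (fderiv ℝ (gradient H) x (EuclideanSpace.single i (1:ℝ))), map_sum] at h
  simp only [hcomp, map_smul, smul_eq_mul] at h
  have h' : (ehess n H x * ehess n Hs (gradient H x)) i k = _ := h
  have hp : (EuclideanSpace.proj k : Euc n →L[ℝ] ℝ) (EuclideanSpace.single i 1)
      = if i = k then 1 else 0 := by
    simp [Pi.single_apply, eq_comm]
  rw [h']
  simp only [Matrix.smul_apply, Matrix.sub_apply, vecMulVec_apply, pd_grad_apply, smul_eq_mul,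
    Matrix.one_apply, _root_.add_apply, _root_.smul_apply, hp]
  field_simp
  ring

/-- Let `K ⊂ ℝ^{n+1}` be a smooth, strictly convex body with the origin in
its interior and let `K*` be its polar body (also smooth and strictly convex, with support
function `h*` encoded by `Hs`).  Then for every `x ∈ S^n`, with `x* = X(x)/|X(x)|`:
`h(x)^{n+2} (h*(x*))^{n+2} / (𝒦(x) 𝒦*(x*)) = 1`. -/
theorem polar_duality_identity
    (n : ℕ) (hn : 2 ≤ n)
    (H : Euc n → ℝ) (K : Set (Euc n))
    (hK : K = {y : Euc n | ∀ x : Euc n, ⟪x, y⟫ ≤ H x})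
    (hhomog : ∀ c : ℝ, 0 < c → ∀ x : Euc n, H (c • x) = c * H x)
    (hconv : ConvexOn ℝ Set.univ H)
    (hsmooth : ContDiffOn ℝ (⊤ : ℕ∞) H {(0 : Euc n)}ᶜ)
    (hpos : ∀ x ∈ sphere (0 : Euc n) 1, 0 < H x)
    (hposdef : ∀ x ∈ sphere (0 : Euc n) 1, (bmat n H x).PosDef)
    (Hs : Euc n → ℝ) (Kstar : Set (Euc n))
    (hKstar : Kstar = {y : Euc n | ∀ x ∈ K, ⟪x, y⟫ ≤ 1})
    (hKstar' : Kstar = {y : Euc n | ∀ x : Euc n, ⟪x, y⟫ ≤ Hs x})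
    (hhomogs : ∀ c : ℝ, 0 < c → ∀ x : Euc n, Hs (c • x) = c * Hs x)
    (hconvs : ConvexOn ℝ Set.univ Hs)
    (hsmooths : ContDiffOn ℝ (⊤ : ℕ∞) Hs {(0 : Euc n)}ᶜ)
    (hposs : ∀ x ∈ sphere (0 : Euc n) 1, 0 < Hs x)
    (hposdefs : ∀ x ∈ sphere (0 : Euc n) 1, (bmat n Hs x).PosDef) :
    ∀ x ∈ sphere (0 : Euc n) 1,
      H x ^ (n + 2) * Hs (‖gradient H x‖⁻¹ • gradient H x) ^ (n + 2)
          / (gaussCurv n H x * gaussCurv n Hs (‖gradient H x‖⁻¹ • gradient H x)) = 1 := by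
  intro x hx
  have hx1 : ‖x‖ = 1 := by simpa using hx
  have hx0 : x ≠ 0 := by
    intro h; simp [h] at hx1
  have hall := fun y hy => pd_polar n H K hK hhomog hconv hsmooth hpos Hs Kstar hKstar hKstar' hhomogs
    hconvs hsmooths y hy
  have hHp := pd_pos n H hhomog hpos
  have hAS := pd_chain n H Hs hsmooth hsmooths hHp (fun y hy => ⟨(hall y hy).1, (hall y hy).2.2⟩) x hx0
  obtain ⟨hG0, hone, -⟩ := hall x hx0
  have hGx : ⟪gradient H x, x⟫ = H x := by
    rw [pd_inner_grad, pd_euler n H hhomog hsmooth x hx0]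
  have hh := hHp x hx0
  have hr : 0 < ‖gradient H x‖ := norm_pos_iff.2 hG0
  set X := gradient H x with hX
  set r := ‖X‖ with hrdef
  set v := r⁻¹ • X with hv
  have hv1 : ‖v‖ = 1 := by
    rw [hv, norm_smul, Real.norm_eq_abs, abs_of_pos (by positivity), ← hrdef, inv_mul_cancel₀ hr.ne']
  have hvs : v ∈ sphere (0 : Euc n) 1 := by simpa using hv1
  have hv0 : v ≠ 0 := by
    intro h; simp [h] at hv1
  have hHsv : Hs v = r⁻¹ := by
    rw [hv, hhomogs _ (by positivity), hone, mul_one]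
  have hT : ehess n Hs X = r⁻¹ • ehess n Hs v :=
    (pd_ehess_homog n Hs hhomogs r⁻¹ (by positivity) X).symm
  have dot : ∀ a b : Euc n, (fun i => a i) ⬝ᵥ (fun i => b i) = ⟪a, b⟫ := by
    intro a b
    simp [dotProduct, PiLp.inner_apply, mul_comm]
  have hb : ∀ (F : Euc n → ℝ) (y : Euc n),
      bmat n F y = ehess n F y + F y • vecMulVec (fun i => y i) (fun i => y i) := by
    intro F y
    ext i j
    simp [bmat, vecMulVec_apply]
  have hA1 := pd_vecMul n H hhomog hsmooth x hx0
  have hA2 : ehess n H x *ᵥ (fun i => x i) = 0 := by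
    rw [← vecMul_transpose, pd_symm n H x (hposdef x hx), hA1]
  have hT1 := pd_vecMul n Hs hhomogs hsmooths v hv0
  have hT2 : ehess n Hs v *ᵥ (fun i => v i) = 0 := by
    rw [← vecMul_transpose, pd_symm n Hs v (hposdefs v hvs), hT1]
  have hdet := pd_det (ehess n H x) (ehess n Hs v) (fun i => x i) (fun i => v i) (H x) (Hs v)
    (H x * r⁻¹) (by positivity) (by rw [hHsv])
    (by rw [dot, real_inner_self_eq_norm_sq, hx1]; norm_num)
    (by rw [dot, real_inner_self_eq_norm_sq, hv1]; norm_num)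
    (by rw [dot, hv, inner_smul_right, real_inner_comm, hGx]; ring)
    hA1 hA2 hT1 hT2
    (by
      rw [hT, Matrix.mul_smul] at hAS
      have : ehess n H x * ehess n Hs v = r • (r⁻¹ • (ehess n H x * ehess n Hs v)) := by
        rw [smul_smul, mul_inv_cancel₀ hr.ne', one_smul]
      rw [this, hAS]
      ext i j
      simp [vecMulVec_apply, hv]
      field_simp)
  rw [← hb, ← hb, Fintype.card_fin] at hdet
  have hfin : H x ^ (n + 2) * Hs v ^ (n + 2) / (gaussCurv n H x * gaussCurv n Hs v)
      = (H x * r⁻¹) ^ (n + 1) * ((bmat n H x).det * (bmat n Hs v).det) := by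
    simp only [gaussCurv, sigman, hHsv]
    rw [← mul_inv, div_inv_eq_mul, pow_succ (H x) (n + 1), pow_succ r⁻¹ (n + 1), mul_pow]
    have e : r⁻¹ * (r⁻¹)⁻¹ = 1 := mul_inv_cancel₀ (by positivity)
    have e' : H x * (H x)⁻¹ = 1 := mul_inv_cancel₀ hh.ne'
    simp only [div_eq_mul_inv]
    calc _ = H x ^ (n + 1) * r⁻¹ ^ (n + 1) * ((bmat n H x).det * (bmat n Hs v).det)
          * (r⁻¹ * (r⁻¹)⁻¹) * (H x * (H x)⁻¹) := by ring
      _ = _ := by rw [e, e', mul_one, mul_one]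
  rw [hfin, hdet, ← mul_pow, mul_inv_cancel₀ (by positivity), one_pow]
end
end
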